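/- arXiv:1511.06632 — 2 statements merged into one kernel-verified Lean document; each statement's English description precedes it below -/
import Mathlib

section
/- For every integer N ≥ 2, every real p > 1, all positive reals f, F with f^p ≤ F, and every κ with c(N,p)·(f^p/F)^{1/(p−1)} ≤ κ ≤ c(N,p), one has D_p(F,f,κ) = ((N^p − 1)/(N^p − N))·(F − c(N,p)^{p−1}·f^p/(p·κ^{p−1})), where D_p(F,f,κ) := inf { sup_{E measurable, μ(E)=κ} ∫_E (M_N φ)^p dμ : φ ≥ 0 measurable on [0,1), ∫ φ dμ = f, ∫ φ^p dμ = F }. -/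
open MeasureTheory Set Filter

/-- The `N`-adic interval `[k/N^m, (k+1)/N^m)` at level `m`. -/
def adicItv (N m k : ℕ) : Set ℝ :=
  Set.Ico ((k : ℝ) / (N : ℝ) ^ m) (((k : ℝ) + 1) / (N : ℝ) ^ m)

/-- The average `(1/μ(I)) ∫_I |φ| dμ` of `φ` over the `N`-adic interval at level `m`, index `k`
(its measure is `N^{-m}`). -/
noncomputable def adicAvg (N : ℕ) (φ : ℝ → ℝ) (m k : ℕ) : ℝ :=
  (N : ℝ) ^ m * ∫ y in adicItv N m k, |φ y|

/-- The `N`-adic maximal operator on `[0,1)`: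
`M_N φ(x) = sup { (1/μ(I)) ∫_I |φ| dμ : x ∈ I, I an N-adic interval }`. -/
noncomputable def adicMax (N : ℕ) (φ : ℝ → ℝ) (x : ℝ) : ℝ :=
  sSup {r : ℝ | ∃ m k : ℕ, k < N ^ m ∧ x ∈ adicItv N m k ∧ r = adicAvg N φ m k}

/-- `sup { ∫_E (M_N φ)^p dμ : E ⊆ [0,1) measurable, μ(E) = κ }`. -/
noncomputable def supMeas (N : ℕ) (p κ : ℝ) (φ : ℝ → ℝ) : ℝ :=
  sSup {z : ℝ | ∃ E : Set ℝ, MeasurableSet E ∧ E ⊆ Set.Ico (0:ℝ) 1 ∧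
    volume E = ENNReal.ofReal κ ∧ z = ∫ x in E, adicMax N φ x ^ p}

/-- The Bellman function `D_p(F,f,κ)`: the infimum of
`sup { ∫_E (M_N φ)^p dμ : μ(E) = κ }` over all nonnegative measurable `φ` on `[0,1)`
with `∫ φ dμ = f` and `∫ φ^p dμ = F`. -/
noncomputable def Dp (N : ℕ) (p F f κ : ℝ) : ℝ :=
  sInf {y : ℝ | ∃ φ : ℝ → ℝ, Measurable φ ∧ (∀ x ∈ Set.Ico (0:ℝ) 1, 0 ≤ φ x) ∧
    (∫ x in Set.Ico (0:ℝ) 1, φ x) = f ∧ (∫ x in Set.Ico (0:ℝ) 1, φ x ^ p) = F ∧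
    y = supMeas N p κ φ}


namespace Adic

lemma N_lt (N : ℕ) (hN : 2 ≤ N) (p : ℝ) (hp : 1 < p) : (N : ℝ) < (N : ℝ) ^ p := by
  have h2 : (1:ℝ) < N := by exact_mod_cast hN
  simpa using Real.rpow_lt_rpow_of_exponent_lt h2 hp

lemma c_le_one (N : ℕ) (hN : 2 ≤ N) (p : ℝ) (hp : 1 < p) :
    ((p - 1) / p) * (((N : ℝ) ^ p - 1) / ((N : ℝ) ^ p - N)) ≤ 1 := by
  have h1 := N_lt N hN p hp
  have h2 : (2:ℝ) ≤ N := by exact_mod_cast hN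
  have h3 := one_add_mul_self_le_rpow_one_add (s := (N:ℝ) - 1) (by linarith) hp.le
  have h4 : (1 + ((N:ℝ) - 1)) = N := by ring
  rw [h4] at h3
  rw [div_mul_div_comm, div_le_one (by apply mul_pos <;> linarith)]
  nlinarith

lemma ineqA (N : ℕ) (hN : 2 ≤ N) (p A : ℝ) (hp : 1 < p)
    (hA : A = ((N : ℝ) ^ p - 1) / ((N : ℝ) ^ p - N)) (x y : ℝ) (hy : 0 < y)
    (hxy : y ≤ x) (hx : x ≤ N * y) :
    y ^ p - A * y ^ (p - 1) * x ≤ (1 - A) * x ^ p := by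
  have h1 := N_lt N hN p hp
  have h2 : (2:ℝ) ≤ N := by exact_mod_cast hN
  obtain ⟨u, rfl⟩ : ∃ u, x = u * y := ⟨x / y, by field_simp⟩
  have hu1 : 1 ≤ u := by
    by_contra h
    push Not at h
    nlinarith
  have hu2 : u ≤ N := le_of_mul_le_mul_right hx hy
  have hc := @(convexOn_rpow hp.le).2 1 (by simp) (N:ℝ) (by simp)
    (((N:ℝ) - u) / (N - 1)) ((u - 1) / ((N:ℝ) - 1))
    (div_nonneg (by linarith) (by linarith)) (div_nonneg (by linarith) (by linarith))
    (by have : (N:ℝ) - 1 ≠ 0 := by linarith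
        field_simp; ring)
  have e : ((N:ℝ) - u) / (N - 1) * 1 + (u - 1) / (N - 1) * N = u := by
    have : (N:ℝ) - 1 ≠ 0 := by linarith
    field_simp; ring
  simp only [smul_eq_mul] at hc
  rw [e, Real.one_rpow] at hc
  rw [Real.mul_rpow (by linarith) hy.le]
  have e2 : A * y ^ (p - 1) * (u * y) = A * u * y ^ p := by
    have : y ^ p = y ^ (p - 1) * y := by
      rw [← Real.rpow_add_one hy.ne']; ring_nf
    rw [this]; ring
  rw [e2]
  have hyp : 0 < y ^ p := Real.rpow_pos_of_pos hy p
  have key : (A - 1) * u ^ p ≤ A * u - 1 := by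
    have hA1 : A - 1 = (N - 1) / ((N:ℝ) ^ p - N) := by
      rw [hA]; have : (N:ℝ) ^ p - N ≠ 0 := by linarith
      field_simp; ring
    have hA0 : 0 ≤ A - 1 := by
      rw [hA1]; exact div_nonneg (by linarith) (by linarith)
    calc (A - 1) * u ^ p ≤ (A - 1) * (((N:ℝ) - u) / (N - 1) * 1 + (u - 1) / (N - 1) * N ^ p) :=
          mul_le_mul_of_nonneg_left hc hA0
      _ = A * u - 1 := by
          rw [hA1, hA]
          have : (N:ℝ) ^ p - N ≠ 0 := by linarith
          have : (N:ℝ) - 1 ≠ 0 := by linarith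
          field_simp; ring
  nlinarith

lemma pow_split {y p : ℝ} (hy : 0 ≤ y) (hp : 1 < p) : y ^ p = y ^ (p - 1) * y := by
  rcases hy.eq_or_lt with h | h
  · rw [← h, Real.zero_rpow (by linarith)]; simp
  · rw [← Real.rpow_add_one h.ne']; ring_nf

lemma stepLow (N : ℕ) (hN : 2 ≤ N) (p A : ℝ) (hp : 1 < p)
    (hA : A = ((N : ℝ) ^ p - 1) / ((N : ℝ) ^ p - N)) (x y : ℝ) (hy : 0 < y)
    (hx : x ≤ N * y) :
    y ^ p - A * y ^ (p - 1) * x ≤ (max y x) ^ p - A * (max y x) ^ (p - 1) * x := by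
  rcases le_total x y with h | h
  · rw [max_eq_left h]
  · rw [max_eq_right h]
    have := ineqA N hN p A hp hA x y hy h hx
    have h2 := pow_split (y := x) (by linarith) hp
    rw [mul_assoc A (x ^ (p - 1)) x, ← h2]
    linarith

lemma stepDoob (p : ℝ) (hp : 1 < p) (x y : ℝ) (hy : 0 < y) :
    (max y x) ^ p - (p / (p - 1)) * (max y x) ^ (p - 1) * x ≤
     y ^ p - (p / (p - 1)) * y ^ (p - 1) * x := by
  rcases le_total x y with h | h
  · rw [max_eq_left h]
  · rw [max_eq_right h]
    have h2 := pow_split (y := x) (by linarith) hp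
    have hq : (Real.HolderConjugate p (p / (p - 1))) := Real.HolderConjugate.conjExponent hp
    have hY := Real.young_inequality_of_nonneg (a := x) (b := y ^ (p - 1)) (by linarith)
      (by positivity) hq
    rw [← Real.rpow_mul hy.le, mul_div_cancel₀ _ (by linarith)] at hY
    have h1 : 0 < p - 1 := by linarith
    have h0 : 0 < p := by linarith
    rw [mul_assoc, ← h2]
    rw [div_div_eq_mul_div] at hY
    have h3 : p / (p - 1) * (x * y ^ (p - 1)) ≤ p / (p - 1) * (x ^ p / p + y ^ p * (p - 1) / p) :=
      mul_le_mul_of_nonneg_left hY (by positivity)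
    have e1 : p / (p - 1) * (x ^ p / p + y ^ p * (p - 1) / p) = x ^ p / (p - 1) + y ^ p := by
      field_simp
    have e2 : x ^ p - p / (p - 1) * x ^ p = - (x ^ p / (p - 1)) := by
      field_simp; ring
    nlinarith

lemma youngEps (p q : ℝ) (hp : 1 < p) (hq : 0 < q) (x y : ℝ) (hy : 0 ≤ y) (hx : 0 ≤ x) :
    q * (y ^ (p - 1) * x) ≤ 1 / 2 * y ^ p + (q * (2 * q) ^ (p - 1)) * x ^ p := by
  have hyp := pow_split hy hp
  have hxp := pow_split hx hp
  have n1 : 0 ≤ y ^ (p - 1) := by positivity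
  have n2 : 0 ≤ x ^ p := by positivity
  have n3 : 0 ≤ y ^ p := by positivity
  rcases le_total (2 * q * x) y with h | h
  · have : 0 ≤ (q * (2 * q) ^ (p - 1)) * x ^ p := by positivity
    rw [hyp]
    nlinarith [mul_le_mul_of_nonneg_left h n1]
  · have h1 : y ^ (p - 1) ≤ (2 * q * x) ^ (p - 1) :=
      Real.rpow_le_rpow hy h (by linarith)
    rw [Real.mul_rpow (by positivity) hx] at h1
    rw [hxp]
    have := mul_le_mul_of_nonneg_left h1 (mul_nonneg hq.le hx)
    nlinarith

end Adic

namespace Adic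

lemma mem_itv {N m k : ℕ} (hN : 2 ≤ N) {x : ℝ} (hx : 0 ≤ x) :
    x ∈ adicItv N m k ↔ ⌊x * (N:ℝ) ^ m⌋₊ = k := by
  have hpos : (0:ℝ) < (N:ℝ) ^ m := by positivity
  rw [Nat.floor_eq_iff (by positivity), adicItv, Set.mem_Ico, div_le_iff₀ hpos, lt_div_iff₀ hpos]

lemma itv_nonneg {N m k : ℕ} {x : ℝ} (h : x ∈ adicItv N m k) : 0 ≤ x :=
  le_trans (by positivity) h.1

lemma meas_itv (N m k : ℕ) : MeasurableSet (adicItv N m k) := measurableSet_Ico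

lemma vol_itv {N m k : ℕ} : volume.real (adicItv N m k) = 1 / (N:ℝ) ^ m := by
  rw [adicItv, Real.volume_real_Ico_of_le]
  · ring
  · gcongr; linarith

lemma vol_itv_ne {N m k : ℕ} : volume (adicItv N m k) ≠ ⊤ := by
  rw [adicItv]; exact measure_Ico_lt_top.ne

lemma idx_lt {N m : ℕ} (hN : 2 ≤ N) {x : ℝ} (h1 : x < 1) :
    ⌊x * (N:ℝ) ^ m⌋₊ < N ^ m := by
  have hpos : (0:ℝ) < (N:ℝ) ^ m := by positivity
  rcases le_total 0 x with h | h
  · rw [Nat.floor_lt (by positivity)]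
    push_cast
    nlinarith
  · rw [Nat.floor_of_nonpos (mul_nonpos_of_nonpos_of_nonneg h hpos.le)]
    positivity

lemma itv_sub {N m k : ℕ} (hN : 2 ≤ N) (hk : k < N ^ m) : adicItv N m k ⊆ Ico 0 1 := by
  intro x hx
  refine ⟨itv_nonneg hx, lt_of_lt_of_le hx.2 ?_⟩
  have hpos : (0:ℝ) < (N:ℝ) ^ m := by positivity
  rw [div_le_one hpos]
  exact_mod_cast hk

lemma idx_succ {N : ℕ} (m : ℕ) (hN : 2 ≤ N) (x : ℝ) :
    ⌊x * (N:ℝ) ^ m⌋₊ = ⌊x * (N:ℝ) ^ (m + 1)⌋₊ / N := by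
  rw [← Nat.floor_div_natCast]
  congr 1
  have : (N:ℝ) ≠ 0 := by positivity
  field_simp
  ring

lemma idx_add {N : ℕ} (m j : ℕ) (hN : 2 ≤ N) (x : ℝ) :
    ⌊x * (N:ℝ) ^ m⌋₊ = ⌊x * (N:ℝ) ^ (m + j)⌋₊ / N ^ j := by
  rw [← Nat.floor_div_natCast]
  congr 1
  have : (N:ℝ) ≠ 0 := by positivity
  push_cast
  field_simp
  ring

lemma itv_succ_sub {N m k : ℕ} (hN : 2 ≤ N) : adicItv N (m + 1) k ⊆ adicItv N m (k / N) := by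
  intro x hx
  have h0 := itv_nonneg hx
  rw [mem_itv hN h0] at hx ⊢
  rw [idx_succ m hN, hx]

lemma Ico_eq {N : ℕ} (m : ℕ) (hN : 2 ≤ N) :
    Ico (0:ℝ) 1 = ⋃ k ∈ Finset.range (N ^ m), adicItv N m k := by
  ext x
  simp only [mem_iUnion, Finset.mem_range, exists_prop]
  constructor
  · intro h
    exact ⟨_, idx_lt hN h.2, (mem_itv hN h.1).2 rfl⟩
  · rintro ⟨k, hk, hx⟩
    exact itv_sub hN hk hx

lemma itv_disj {N m : ℕ} (hN : 2 ≤ N) (s : Set ℕ) : s.PairwiseDisjoint (adicItv N m) := by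
  intro i _ j _ hij
  rw [Function.onFun, Set.disjoint_left]
  intro x hx hx'
  have h0 := itv_nonneg hx
  rw [mem_itv hN h0] at hx hx'
  exact hij (hx ▸ hx')

/-- martingale -/
noncomputable def X (N : ℕ) (φ : ℝ → ℝ) (m : ℕ) (x : ℝ) : ℝ := adicAvg N φ m ⌊x * (N:ℝ) ^ m⌋₊

lemma max_eq {N : ℕ} (hN : 2 ≤ N) (φ : ℝ → ℝ) {x : ℝ} (hx : x ∈ Ico (0:ℝ) 1) :
    adicMax N φ x = ⨆ m, X N φ m x := by
  unfold adicMax iSup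
  congr 1
  ext r
  simp only [mem_ofPred_eq, mem_range, X]
  constructor
  · rintro ⟨m, k, hk, hxk, rfl⟩
    rw [mem_itv hN hx.1] at hxk
    exact ⟨m, by rw [hxk]⟩
  · rintro ⟨m, rfl⟩
    exact ⟨m, _, idx_lt hN hx.2, (mem_itv hN hx.1).2 rfl, rfl⟩

lemma meas_idx (N m : ℕ) (h : ℕ → ℝ) : Measurable (fun x : ℝ => h ⌊x * (N:ℝ) ^ m⌋₊) :=
  (measurable_from_top (f := h)).comp (Nat.measurable_floor.comp (measurable_id.mul_const _))

lemma X_nonneg (N : ℕ) (φ : ℝ → ℝ) (m : ℕ) (x : ℝ) : 0 ≤ X N φ m x := by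
  unfold X adicAvg
  exact mul_nonneg (by positivity) (integral_nonneg fun _ => abs_nonneg _)

lemma bdd_idx {N : ℕ} (m : ℕ) (hN : 2 ≤ N) (h : ℕ → ℝ) :
    ∃ C, ∀ x ∈ Ico (0:ℝ) 1, |h ⌊x * (N:ℝ) ^ m⌋₊| ≤ C := by
  refine ⟨∑ k ∈ Finset.range (N ^ m), |h k|, fun x hx => ?_⟩
  exact Finset.single_le_sum (f := fun k => |h k|) (fun _ _ => abs_nonneg _)
    (Finset.mem_range.2 (idx_lt hN hx.2))

lemma int_idx_mul {N : ℕ} (m : ℕ) (hN : 2 ≤ N) (h : ℕ → ℝ) {φ : ℝ → ℝ}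
    (hφ : IntegrableOn φ (Ico 0 1)) :
    IntegrableOn (fun x => h ⌊x * (N:ℝ) ^ m⌋₊ * φ x) (Ico 0 1) := by
  obtain ⟨C, hC⟩ := bdd_idx m hN h
  refine Integrable.bdd_mul (c := C) hφ (meas_idx N m h).aestronglyMeasurable ?_
  filter_upwards [ae_restrict_mem measurableSet_Ico] with x hx
  exact hC x hx

lemma int_idx {N : ℕ} (m : ℕ) (hN : 2 ≤ N) (h : ℕ → ℝ) :
    IntegrableOn (fun x => h ⌊x * (N:ℝ) ^ m⌋₊) (Ico 0 1) := by
  have := int_idx_mul m hN h (φ := fun _ => 1) (by simp)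
  simpa using this

lemma key {N : ℕ} (m : ℕ) (hN : 2 ≤ N) (h : ℕ → ℝ) {φ : ℝ → ℝ} (h0 : ∀ x, 0 ≤ φ x)
    (hφ : IntegrableOn φ (Ico 0 1)) :
    ∫ x in Ico (0:ℝ) 1, h ⌊x * (N:ℝ) ^ m⌋₊ * X N φ m x =
    ∫ x in Ico (0:ℝ) 1, h ⌊x * (N:ℝ) ^ m⌋₊ * φ x := by
  have i1 := int_idx m hN (fun k => h k * adicAvg N φ m k)
  have i2 := int_idx_mul m hN h hφ
  change ∫ x in Ico (0:ℝ) 1, (fun k => h k * adicAvg N φ m k) ⌊x * (N:ℝ) ^ m⌋₊ = _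
  rw [Ico_eq m hN]
  rw [Ico_eq m hN] at i1 i2
  rw [integral_biUnion_finset _ (fun i _ => meas_itv N m i) (itv_disj hN _)
    (fun i hi => i1.mono_set (subset_biUnion_of_mem (u := fun k => adicItv N m k) hi)),
    integral_biUnion_finset _ (fun i _ => meas_itv N m i) (itv_disj hN _)
    (fun i hi => i2.mono_set (subset_biUnion_of_mem (u := fun k => adicItv N m k) hi))]
  refine Finset.sum_congr rfl fun k _ => ?_
  have e1 : ∫ x in adicItv N m k, h ⌊x * (N:ℝ) ^ m⌋₊ * φ x = ∫ x in adicItv N m k, h k * φ x := by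
    refine setIntegral_congr_fun (meas_itv N m k) fun x hx => ?_
    have := (mem_itv hN (itv_nonneg hx)).1 hx
    simp only [this]
  have e2 : ∫ x in adicItv N m k, h ⌊x * (N:ℝ) ^ m⌋₊ * adicAvg N φ m ⌊x * (N:ℝ) ^ m⌋₊
      = ∫ x in adicItv N m k, h k * adicAvg N φ m k := by
    refine setIntegral_congr_fun (meas_itv N m k) fun x hx => ?_
    have := (mem_itv hN (itv_nonneg hx)).1 hx
    simp only [this]
  rw [e1, e2, setIntegral_const, vol_itv, integral_const_mul, adicAvg]
  simp only [abs_of_nonneg (h0 _), smul_eq_mul]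
  have : (0:ℝ) < (N:ℝ) ^ m := by positivity
  field_simp

lemma avg_succ_le {N : ℕ} (m k : ℕ) (hN : 2 ≤ N) {φ : ℝ → ℝ} (hφ : Integrable φ) :
    adicAvg N φ (m + 1) k ≤ N * adicAvg N φ m (k / N) := by
  unfold adicAvg
  rw [pow_succ', mul_assoc]
  gcongr
  · exact ae_of_all _ fun _ => abs_nonneg _
  · exact hφ.abs.integrableOn
  · exact itv_succ_sub hN

lemma X_succ_le {N : ℕ} (m : ℕ) (hN : 2 ≤ N) {φ : ℝ → ℝ} (hφ : Integrable φ) (x : ℝ) :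
    X N φ (m + 1) x ≤ N * X N φ m x := by
  unfold X
  rw [idx_succ m hN]
  exact avg_succ_le m _ hN hφ

lemma X_tendsto {N : ℕ} (hN : 2 ≤ N) {φ : ℝ → ℝ} (h0 : ∀ x, 0 ≤ φ x) (hφ : Integrable φ) :
    ∀ᵐ x ∂volume.restrict (Ico (0:ℝ) 1), Tendsto (fun m => X N φ m x) atTop (nhds (φ x)) := by
  have h := IsUnifLocDoublingMeasure.ae_tendsto_average (μ := (volume : Measure ℝ))
    hφ.locallyIntegrable 1
  have h' := ae_restrict_of_ae (s := Ico (0:ℝ) 1) h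
  filter_upwards [h', ae_restrict_mem measurableSet_Ico] with x hx hx01
  have hN1 : (1:ℝ) < N := by exact_mod_cast hN
  have hlim := hx (ι := ℕ) (l := atTop) (fun m => ((⌊x * (N:ℝ) ^ m⌋₊ : ℝ) + 1 / 2) / (N:ℝ) ^ m)
    (fun m => (1 / 2) / (N:ℝ) ^ m) ?_ ?_
  · refine hlim.congr fun m => ?_
    have hpos : (0:ℝ) < (N:ℝ) ^ m := by positivity
    rw [Real.closedBall_eq_Icc]
    have a1 : ((⌊x * (N:ℝ) ^ m⌋₊ : ℝ) + 1 / 2) / (N:ℝ) ^ m - (1 / 2) / (N:ℝ) ^ m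
      = (⌊x * (N:ℝ) ^ m⌋₊ : ℝ) / (N:ℝ) ^ m := by ring
    have a2 : ((⌊x * (N:ℝ) ^ m⌋₊ : ℝ) + 1 / 2) / (N:ℝ) ^ m + (1 / 2) / (N:ℝ) ^ m
      = ((⌊x * (N:ℝ) ^ m⌋₊ : ℝ) + 1) / (N:ℝ) ^ m := by ring
    rw [a1, a2, setAverage_eq, integral_Icc_eq_integral_Ico, X, adicAvg, adicItv,
      Real.volume_real_Icc_of_le (by gcongr; linarith)]
    simp only [abs_of_nonneg (h0 _), smul_eq_mul]
    congr 1
    field_simp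
    ring
  · rw [tendsto_nhdsWithin_iff]
    constructor
    · have : Tendsto (fun m : ℕ => (1 / 2 : ℝ) * ((N:ℝ)⁻¹) ^ m) atTop (nhds (1 / 2 * 0)) :=
        (tendsto_pow_atTop_nhds_zero_of_lt_one (by positivity)
          (inv_lt_one_of_one_lt₀ hN1)).const_mul _
      rw [mul_zero] at this
      refine this.congr fun m => ?_
      rw [inv_pow]; rfl
    · exact Eventually.of_forall fun m => by
        have hpos : (0:ℝ) < (N:ℝ) ^ m := by positivity
        simp only [mem_Ioi]; positivity
  · refine Eventually.of_forall fun m => ?_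
    have hpos : (0:ℝ) < (N:ℝ) ^ m := by positivity
    have hm : x ∈ adicItv N m ⌊x * (N:ℝ) ^ m⌋₊ := (mem_itv hN hx01.1).2 rfl
    rw [Real.closedBall_eq_Icc, mem_Icc]
    have a1 := hm.1
    have a2 := hm.2
    have e1 : ((⌊x * (N:ℝ) ^ m⌋₊ : ℝ) + 1 / 2) / (N:ℝ) ^ m - (1 / 2) / (N:ℝ) ^ m
      = (⌊x * (N:ℝ) ^ m⌋₊ : ℝ) / (N:ℝ) ^ m := by ring
    have e2 : ((⌊x * (N:ℝ) ^ m⌋₊ : ℝ) + 1 / 2) / (N:ℝ) ^ m + (1 / 2) / (N:ℝ) ^ m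
      = ((⌊x * (N:ℝ) ^ m⌋₊ : ℝ) + 1) / (N:ℝ) ^ m := by ring
    constructor <;> linarith

end Adic

namespace Adic

/-- running maximum -/
noncomputable def Y (N : ℕ) (φ : ℝ → ℝ) (l : ℝ) : ℕ → ℝ → ℝ
  | 0, _ => l
  | (n + 1), x => max (Y N φ l n x) (X N φ (n + 1) x)

lemma Y_idx {N : ℕ} (hN : 2 ≤ N) (φ : ℝ → ℝ) (l : ℝ) (n : ℕ) :
    ∃ h : ℕ → ℝ, ∀ x, Y N φ l n x = h ⌊x * (N:ℝ) ^ n⌋₊ := by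
  induction n with
  | zero => exact ⟨fun _ => l, fun x => rfl⟩
  | succ n ih =>
    obtain ⟨h, hh⟩ := ih
    refine ⟨fun k => max (h (k / N)) (adicAvg N φ (n + 1) k), fun x => ?_⟩
    simp only [Y, hh, X]
    rw [idx_succ n hN]

lemma Y_ge {N : ℕ} (φ : ℝ → ℝ) (l : ℝ) (n : ℕ) (x : ℝ) : l ≤ Y N φ l n x := by
  induction n with
  | zero => exact le_rfl
  | succ n ih => exact ih.trans (le_max_left _ _)

lemma Y_mono {N : ℕ} (φ : ℝ → ℝ) (l : ℝ) (x : ℝ) : Monotone (fun n => Y N φ l n x) :=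
  monotone_nat_of_le_succ fun _ => le_max_left _ _

lemma X_zero {N : ℕ} {φ : ℝ → ℝ} (h0 : ∀ x, 0 ≤ φ x) {x : ℝ} (hx : x ∈ Ico (0:ℝ) 1) :
    X N φ 0 x = ∫ x in Ico (0:ℝ) 1, φ x := by
  have : ⌊x⌋₊ = 0 := Nat.floor_eq_zero.2 hx.2
  simp [X, adicAvg, adicItv, this, abs_of_nonneg (h0 _)]

lemma X_le_Y {N : ℕ} {φ : ℝ → ℝ} (h0 : ∀ x, 0 ≤ φ x) {l : ℝ} (hl : ∫ x in Ico (0:ℝ) 1, φ x ≤ l)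
    (n : ℕ) {x : ℝ} (hx : x ∈ Ico (0:ℝ) 1) : X N φ n x ≤ Y N φ l n x := by
  cases n with
  | zero => rw [X_zero h0 hx]; exact hl
  | succ n => exact le_max_right _ _

lemma Y_le {N : ℕ} (φ : ℝ → ℝ) (l w : ℝ) (x : ℝ) (hl : l ≤ w) (hw : ∀ n, X N φ n x ≤ w) (n : ℕ) :
    Y N φ l n x ≤ w := by
  induction n with
  | zero => exact hl
  | succ n ih => exact max_le ih (hw _)

lemma key_pow {N : ℕ} (hN : 2 ≤ N) {φ : ℝ → ℝ} (h0 : ∀ x, 0 ≤ φ x) (hφ : Integrable φ)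
    (l r : ℝ) (n : ℕ) :
    ∫ x in Ico (0:ℝ) 1, Y N φ l n x ^ r * X N φ n x =
    ∫ x in Ico (0:ℝ) 1, Y N φ l n x ^ r * φ x := by
  obtain ⟨h, hh⟩ := Y_idx hN φ l n
  simp only [hh]
  exact key n hN (fun k => h k ^ r) h0 hφ.integrableOn

lemma key_pow' {N : ℕ} (hN : 2 ≤ N) {φ : ℝ → ℝ} (h0 : ∀ x, 0 ≤ φ x) (hφ : Integrable φ)
    (l r : ℝ) (n : ℕ) :
    ∫ x in Ico (0:ℝ) 1, Y N φ l n x ^ r * X N φ (n + 1) x =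
    ∫ x in Ico (0:ℝ) 1, Y N φ l n x ^ r * φ x := by
  obtain ⟨h, hh⟩ := Y_idx hN φ l n
  simp only [hh]
  simp only [idx_succ n hN]
  exact key (n + 1) hN (fun k => h (k / N) ^ r) h0 hφ.integrableOn

lemma int_Y_pow {N : ℕ} (hN : 2 ≤ N) (φ : ℝ → ℝ) (l r : ℝ) (n : ℕ) :
    IntegrableOn (fun x => Y N φ l n x ^ r) (Ico (0:ℝ) 1) := by
  obtain ⟨h, hh⟩ := Y_idx hN φ l n
  simp only [hh]
  exact int_idx n hN (fun k => h k ^ r)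

lemma int_Y_pow_mul {N : ℕ} (hN : 2 ≤ N) (φ ψ : ℝ → ℝ) (hψ : IntegrableOn ψ (Ico 0 1))
    (l r : ℝ) (n : ℕ) :
    IntegrableOn (fun x => Y N φ l n x ^ r * ψ x) (Ico (0:ℝ) 1) := by
  obtain ⟨h, hh⟩ := Y_idx hN φ l n
  simp only [hh]
  exact int_idx_mul n hN (fun k => h k ^ r) hψ

lemma int_X {N : ℕ} (hN : 2 ≤ N) (φ : ℝ → ℝ) (n : ℕ) :
    IntegrableOn (X N φ n) (Ico (0:ℝ) 1) := int_idx n hN _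

/-- integrated functional -/
lemma V_eq {N : ℕ} (hN : 2 ≤ N) {φ ψ : ℝ → ℝ} (hψ : IntegrableOn ψ (Ico (0:ℝ) 1)) (l B p : ℝ) (n : ℕ) :
    ∫ x in Ico (0:ℝ) 1, (Y N φ l n x ^ p - B * Y N φ l n x ^ (p - 1) * ψ x) =
    (∫ x in Ico (0:ℝ) 1, Y N φ l n x ^ p) - B * ∫ x in Ico (0:ℝ) 1, Y N φ l n x ^ (p - 1) * ψ x := by
  simp only [mul_assoc]
  rw [integral_sub (int_Y_pow hN φ l p n) ((int_Y_pow_mul hN φ ψ hψ l (p-1) n).const_mul B),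
    integral_const_mul]

lemma int_V {N : ℕ} (hN : 2 ≤ N) {φ ψ : ℝ → ℝ} (hψ : IntegrableOn ψ (Ico (0:ℝ) 1)) (l B p : ℝ) (n : ℕ) :
    IntegrableOn (fun x => Y N φ l n x ^ p - B * Y N φ l n x ^ (p - 1) * ψ x) (Ico (0:ℝ) 1) := by
  simp only [mul_assoc]
  exact (int_Y_pow hN φ l p n).sub ((int_Y_pow_mul hN φ ψ hψ l (p-1) n).const_mul B)

lemma V_zero {N : ℕ} {φ : ℝ → ℝ} (l B p : ℝ) :
    (∫ x in Ico (0:ℝ) 1, Y N φ l 0 x ^ p) - B * ∫ x in Ico (0:ℝ) 1, Y N φ l 0 x ^ (p - 1) * φ x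
    = l ^ p - B * l ^ (p - 1) * ∫ x in Ico (0:ℝ) 1, φ x := by
  simp only [Y]
  rw [integral_const_mul]
  simp
  ring

lemma lowV {N : ℕ} (hN : 2 ≤ N) (p A : ℝ) (hp : 1 < p)
    (hA : A = ((N : ℝ) ^ p - 1) / ((N : ℝ) ^ p - N))
    {φ : ℝ → ℝ} (h0 : ∀ x, 0 ≤ φ x) (hφ : Integrable φ)
    {l : ℝ} (hl0 : 0 < l) (hl : ∫ x in Ico (0:ℝ) 1, φ x ≤ l) (n : ℕ) :
    l ^ p - A * l ^ (p - 1) * (∫ x in Ico (0:ℝ) 1, φ x) ≤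
    (∫ x in Ico (0:ℝ) 1, Y N φ l n x ^ p)
      - A * ∫ x in Ico (0:ℝ) 1, Y N φ l n x ^ (p - 1) * φ x := by
  induction n with
  | zero => rw [V_zero]
  | succ n ih =>
    refine ih.trans ?_
    rw [← key_pow' hN h0 hφ l (p - 1) n, ← key_pow hN h0 hφ l (p - 1) (n + 1), ← V_eq hN (int_X hN φ (n+1)),
      ← V_eq hN (int_X hN φ (n+1))]
    refine setIntegral_mono_on (int_V hN (int_X hN φ (n+1)) _ _ _ _)
      (int_V hN (int_X hN φ (n+1)) _ _ _ _) measurableSet_Ico fun x hx => ?_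
    refine stepLow N hN p A hp hA _ _ (hl0.trans_le (Y_ge φ l n x)) ?_
    exact (X_succ_le n hN hφ x).trans
      (mul_le_mul_of_nonneg_left (X_le_Y h0 hl n hx) (by positivity))

lemma doobV {N : ℕ} (hN : 2 ≤ N) (p : ℝ) (hp : 1 < p)
    {φ : ℝ → ℝ} (h0 : ∀ x, 0 ≤ φ x) (hφ : Integrable φ)
    {l : ℝ} (hl0 : 0 < l) (n : ℕ) :
    (∫ x in Ico (0:ℝ) 1, Y N φ l n x ^ p)
      - p / (p - 1) * ∫ x in Ico (0:ℝ) 1, Y N φ l n x ^ (p - 1) * φ x ≤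
    l ^ p - p / (p - 1) * l ^ (p - 1) * (∫ x in Ico (0:ℝ) 1, φ x) := by
  induction n with
  | zero => rw [V_zero]
  | succ n ih =>
    refine le_trans ?_ ih
    rw [← key_pow' hN h0 hφ l (p - 1) n, ← key_pow hN h0 hφ l (p - 1) (n + 1), ← V_eq hN (int_X hN φ (n+1)),
      ← V_eq hN (int_X hN φ (n+1))]
    refine setIntegral_mono_on (int_V hN (int_X hN φ (n+1)) _ _ _ _)
      (int_V hN (int_X hN φ (n+1)) _ _ _ _) measurableSet_Ico fun x hx => ?_
    exact stepDoob p hp _ _ (hl0.trans_le (Y_ge φ l n x))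

lemma doob {N : ℕ} (hN : 2 ≤ N) (p : ℝ) (hp : 1 < p)
    {φ : ℝ → ℝ} (h0 : ∀ x, 0 ≤ φ x) (hφ : Integrable φ)
    (hφp : IntegrableOn (fun x => φ x ^ p) (Ico 0 1))
    {l : ℝ} (hl0 : 0 < l) : ∃ K, ∀ n,
    (∫ x in Ico (0:ℝ) 1, Y N φ l n x ^ p) ≤ K := by
  set q := p / (p - 1) with hq
  have hq0 : 0 < q := div_pos (by linarith) (by linarith)
  have hf0 : 0 ≤ ∫ x in Ico (0:ℝ) 1, φ x := integral_nonneg h0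
  refine ⟨2 * (l ^ p + (q * (2 * q) ^ (p - 1)) * ∫ x in Ico (0:ℝ) 1, φ x ^ p), fun n => ?_⟩
  have h1 := doobV hN p hp h0 hφ hl0 n
  rw [← hq] at h1
  have h2 : ∫ x in Ico (0:ℝ) 1, q * (Y N φ l n x ^ (p - 1) * φ x) ≤
    ∫ x in Ico (0:ℝ) 1, (1 / 2 * Y N φ l n x ^ p + (q * (2 * q) ^ (p - 1)) * φ x ^ p) := by
    refine setIntegral_mono_on ((int_Y_pow_mul hN φ φ hφ.integrableOn l (p-1) n).const_mul q)
      (((int_Y_pow hN φ l p n).const_mul _).add (hφp.const_mul _)) measurableSet_Ico fun x hx => ?_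
    exact youngEps p q hp hq0 _ _ (hl0.le.trans (Y_ge φ l n x)) (h0 x)
  rw [integral_const_mul, integral_add ((int_Y_pow hN φ l p n).const_mul _) (hφp.const_mul _),
    integral_const_mul, integral_const_mul] at h2
  have h3 : 0 ≤ q * l ^ (p - 1) * ∫ x in Ico (0:ℝ) 1, φ x := by positivity
  linarith

lemma meas_Y {N : ℕ} (hN : 2 ≤ N) (φ : ℝ → ℝ) (l : ℝ) (n : ℕ) : Measurable (Y N φ l n) := by
  obtain ⟨h, hh⟩ := Y_idx hN φ l n
  rw [funext hh]
  exact meas_idx N n h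

lemma max_bdd {N : ℕ} (hN : 2 ≤ N) (p : ℝ) (hp : 1 < p)
    {φ : ℝ → ℝ} (h0 : ∀ x, 0 ≤ φ x) (hφ : Integrable φ)
    (hφp : IntegrableOn (fun x => φ x ^ p) (Ico 0 1))
    (hf : 0 < ∫ x in Ico (0:ℝ) 1, φ x) :
    (∀ᵐ x ∂volume.restrict (Ico (0:ℝ) 1), BddAbove (range fun n => X N φ n x)) ∧
    IntegrableOn (fun x => adicMax N φ x ^ p) (Ico 0 1) := by
  obtain ⟨K, hK⟩ := doob hN p hp h0 hφ hφp hf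
  set l := ∫ x in Ico (0:ℝ) 1, φ x with hl
  have hYpos : ∀ n x, 0 < Y N φ l n x := fun n x => hf.trans_le (Y_ge φ l n x)
  set G : ℝ → ENNReal := fun x => ⨆ n, ENNReal.ofReal (Y N φ l n x ^ p) with hG
  have hGm : Measurable G := Measurable.iSup fun n =>
    ((meas_Y hN φ l n).pow_const p).ennreal_ofReal
  have hGi : ∫⁻ x in Ico (0:ℝ) 1, G x ≤ ENNReal.ofReal K := by
    rw [hG, lintegral_iSup (fun n => ((meas_Y hN φ l n).pow_const p).ennreal_ofReal)]
    · refine iSup_le fun n => ?_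
      rw [← ofReal_integral_eq_lintegral_ofReal (int_Y_pow hN φ l p n)]
      · exact ENNReal.ofReal_le_ofReal (hK n)
      · exact ae_of_all _ fun x => Real.rpow_nonneg (hYpos n x).le p
    · intro a b hab x
      exact ENNReal.ofReal_le_ofReal
        (Real.rpow_le_rpow (hYpos a x).le (Y_mono φ l x hab) (by linarith))
  have hGt : ∀ᵐ x ∂volume.restrict (Ico (0:ℝ) 1), G x < ⊤ :=
    ae_lt_top hGm (hGi.trans_lt ENNReal.ofReal_lt_top).ne
  have hXG : ∀ x ∈ Ico (0:ℝ) 1, G x < ⊤ → ∀ n, X N φ n x ≤ (G x).toReal ^ (1 / p) := by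
    intro x hx hg n
    refine (X_le_Y h0 le_rfl n hx).trans ?_
    have h1 : ENNReal.ofReal (Y N φ l n x ^ p) ≤ G x :=
      le_iSup (fun n => ENNReal.ofReal (Y N φ l n x ^ p)) n
    have h2 := (ENNReal.ofReal_le_iff_le_toReal hg.ne).1 h1
    have h3 := Real.rpow_le_rpow (Real.rpow_nonneg (hYpos n x).le p) h2
      (z := 1 / p) (by positivity)
    rwa [← Real.rpow_mul (hYpos n x).le, mul_one_div_cancel (by linarith), Real.rpow_one] at h3
  constructor
  · filter_upwards [hGt, ae_restrict_mem measurableSet_Ico] with x hg hx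
    exact ⟨_, by rintro _ ⟨n, rfl⟩; exact hXG x hx hg n⟩
  · have hint : Integrable (fun x => (G x).toReal) (volume.restrict (Ico (0:ℝ) 1)) :=
      integrable_toReal_of_lintegral_ne_top hGm.aemeasurable
        (hGi.trans_lt ENNReal.ofReal_lt_top).ne
    refine hint.mono' ?_ ?_
    · have hm : Measurable fun x => (⨆ m, X N φ m x) ^ p :=
        (Measurable.iSup fun m => meas_idx N m _).pow_const p
      refine hm.aestronglyMeasurable.congr ?_
      filter_upwards [ae_restrict_mem measurableSet_Ico] with x hx
      rw [max_eq hN φ hx]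
    · filter_upwards [hGt, ae_restrict_mem measurableSet_Ico] with x hg hx
      have hs : 0 ≤ ⨆ m, X N φ m x := Real.iSup_nonneg fun m => X_nonneg N φ m x
      rw [max_eq hN φ hx, Real.norm_of_nonneg (Real.rpow_nonneg hs p)]
      have h1 := ciSup_le (hXG x hx hg)
      have h2 := Real.rpow_le_rpow hs h1 (z := p) (by linarith)
      rwa [← Real.rpow_mul ENNReal.toReal_nonneg, one_div_mul_cancel (by linarith),
        Real.rpow_one] at h2

/-- the main lower estimate -/
lemma low_main {N : ℕ} (hN : 2 ≤ N) (p A : ℝ) (hp : 1 < p)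
    (hA : A = ((N : ℝ) ^ p - 1) / ((N : ℝ) ^ p - N))
    {φ : ℝ → ℝ} (h0 : ∀ x, 0 ≤ φ x) (hφm : Measurable φ) (hφ : Integrable φ)
    (hφp : IntegrableOn (fun x => φ x ^ p) (Ico 0 1))
    (hf : 0 < ∫ x in Ico (0:ℝ) 1, φ x)
    {l : ℝ} (hl : ∫ x in Ico (0:ℝ) 1, φ x ≤ l) :
    A * (∫ x in Ico (0:ℝ) 1, φ x ^ p) + l ^ p - A * l ^ (p - 1) * (∫ x in Ico (0:ℝ) 1, φ x) ≤
    ∫ x in Ico (0:ℝ) 1, (max l (adicMax N φ x)) ^ p := by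
  have hl0 : 0 < l := hf.trans_le hl
  obtain ⟨hb, hi⟩ := max_bdd hN p hp h0 hφ hφp hf
  have hA0 : 0 ≤ A := by
    have h1 := N_lt N hN p hp
    have h2 : (2:ℝ) ≤ N := by exact_mod_cast hN
    rw [hA]; exact div_nonneg (by linarith) (by linarith)
  have himax : IntegrableOn (fun x => (max l (adicMax N φ x)) ^ p) (Ico 0 1) := by
    have hc : IntegrableOn (fun _ : ℝ => l ^ p) (Ico (0:ℝ) 1) := by simp
    refine (hc.sup hi).congr ?_
    filter_upwards [ae_restrict_mem measurableSet_Ico] with x hx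
    have hs : 0 ≤ adicMax N φ x := by
      rw [max_eq hN φ hx]; exact Real.iSup_nonneg fun m => X_nonneg N φ m x
    rcases le_total l (adicMax N φ x) with h | h
    · have := Real.rpow_le_rpow hl0.le h (z := p) (by linarith)
      simp [max_eq_right h, this]
    · have := Real.rpow_le_rpow hs h (z := p) (by linarith)
      simp [max_eq_left h, this]
  have h1 : ∀ n, A * (∫ x in Ico (0:ℝ) 1, (min (X N φ n x) (φ x)) ^ (p - 1) * φ x) + l ^ p
      - A * l ^ (p - 1) * (∫ x in Ico (0:ℝ) 1, φ x) ≤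
      ∫ x in Ico (0:ℝ) 1, (max l (adicMax N φ x)) ^ p := by
    intro n
    have a1 := lowV hN p A hp hA h0 hφ hl0 hl n
    have a2 : ∫ x in Ico (0:ℝ) 1, Y N φ l n x ^ p ≤
        ∫ x in Ico (0:ℝ) 1, (max l (adicMax N φ x)) ^ p := by
      refine integral_mono_ae (int_Y_pow hN φ l p n) himax ?_
      filter_upwards [hb, ae_restrict_mem measurableSet_Ico] with x hbx hx
      refine Real.rpow_le_rpow (hl0.le.trans (Y_ge φ l n x)) ?_ (by linarith)
      refine Y_le φ l _ x (le_max_left _ _) (fun m => le_trans ?_ (le_max_right _ _)) n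
      rw [max_eq hN φ hx]
      exact le_ciSup hbx m
    have a3 : ∫ x in Ico (0:ℝ) 1, (min (X N φ n x) (φ x)) ^ (p - 1) * φ x ≤
        ∫ x in Ico (0:ℝ) 1, Y N φ l n x ^ (p - 1) * φ x := by
      refine integral_mono_of_nonneg ?_ (int_Y_pow_mul hN φ φ hφ.integrableOn l (p-1) n) ?_
      · exact ae_of_all _ fun x => mul_nonneg
          (Real.rpow_nonneg (le_min (X_nonneg N φ n x) (h0 x)) _) (h0 x)
      · filter_upwards [ae_restrict_mem measurableSet_Ico] with x hx
        refine mul_le_mul_of_nonneg_right ?_ (h0 x)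
        exact Real.rpow_le_rpow (le_min (X_nonneg N φ n x) (h0 x))
          ((min_le_left _ _).trans (X_le_Y h0 hl n hx)) (by linarith)
    have := mul_le_mul_of_nonneg_left a3 hA0
    linarith
  have hlim : Tendsto (fun n => ∫ x in Ico (0:ℝ) 1, (min (X N φ n x) (φ x)) ^ (p - 1) * φ x)
      atTop (nhds (∫ x in Ico (0:ℝ) 1, φ x ^ p)) := by
    refine tendsto_integral_of_dominated_convergence (fun x => φ x ^ p) ?_ hφp ?_ ?_
    · intro n
      exact ((((meas_idx N n _).min hφm).pow_const _).mul hφm).aestronglyMeasurable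
    · intro n
      refine ae_of_all _ fun x => ?_
      have hm0 := le_min (X_nonneg N φ n x) (h0 x)
      rw [Real.norm_of_nonneg (mul_nonneg (Real.rpow_nonneg hm0 _) (h0 x)), pow_split (h0 x) hp]
      exact mul_le_mul_of_nonneg_right
        (Real.rpow_le_rpow hm0 (min_le_right _ _) (by linarith)) (h0 x)
    · filter_upwards [X_tendsto hN h0 hφ] with x hx
      have t1 : Tendsto (fun n => min (X N φ n x) (φ x)) atTop (nhds (φ x)) := by
        simpa using hx.min (tendsto_const_nhds (x := φ x))
      rw [pow_split (h0 x) hp]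
      exact (t1.rpow_const (Or.inr (by linarith))).mul_const _
  exact le_of_tendsto' (((hlim.const_mul A).add_const _).sub_const _) h1

end Adic

namespace Adic

lemma exists_top (W : ℝ → ℝ) (hW : Measurable W) (f κ : ℝ) (hf : ∀ x, f ≤ W x) (hκ0 : 0 < κ)
    (hκ1 : κ ≤ 1) :
    ∃ t, f ≤ t ∧ ∃ E : Set ℝ, MeasurableSet E ∧ E ⊆ Ico (0:ℝ) 1 ∧ volume E = ENNReal.ofReal κ ∧
      (∀ x ∈ E, t ≤ W x) ∧ (∀ x ∈ Ico (0:ℝ) 1 \ E, W x ≤ t) := by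
  set μ : Measure ℝ := volume.restrict (Ico (0:ℝ) 1) with hμ
  have hprob : μ univ = 1 := by simp [hμ]
  have hfin : IsFiniteMeasure μ := ⟨by rw [hprob]; simp⟩
  set T : Set ℝ := {t | f ≤ t ∧ μ {x | t < W x} ≤ ENNReal.ofReal κ} with hT
  have hmeas : ∀ t, MeasurableSet {x | t < W x} := fun t => measurableSet_lt measurable_const hW
  have hmeas' : ∀ t, MeasurableSet {x | t ≤ W x} := fun t => measurableSet_le measurable_const hW
  have hbdd : BddBelow T := ⟨f, fun t ht => ht.1⟩
  have hne : T.Nonempty := by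
    have h1 : Tendsto (fun n : ℕ => μ {x | (n:ℝ) < W x}) atTop (nhds (μ (⋂ n : ℕ, {x | (n:ℝ) < W x}))) := by
      refine tendsto_measure_iInter_atTop (fun n => (hmeas n).nullMeasurableSet) ?_
        ⟨0, measure_ne_top _ _⟩
      intro a b hab x hx
      have : (a:ℝ) ≤ b := by exact_mod_cast hab
      exact lt_of_le_of_lt this hx
    have h2 : (⋂ n : ℕ, {x | (n:ℝ) < W x}) = ∅ := by
      ext x
      simp only [mem_iInter, mem_ofPred_eq, mem_empty_iff_false, iff_false, not_forall, not_lt]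
      exact exists_nat_ge (W x)
    rw [h2, measure_empty] at h1
    have h3 := h1.eventually (Iic_mem_nhds (ENNReal.ofReal_pos.2 hκ0))
    obtain ⟨n, hn, hn'⟩ := (h3.and (eventually_ge_atTop ⌈f⌉₊)).exists
    exact ⟨n, Nat.ceil_le.1 hn', hn⟩
  set t := sInf T with ht
  have hft : f ≤ t := le_csInf hne fun s hs => hs.1
  have hup : μ {x | t < W x} ≤ ENNReal.ofReal κ := by
    have e : {x | t < W x} = ⋃ n : ℕ, {x | t + 1 / ((n:ℝ) + 1) < W x} := by
      ext x
      simp only [mem_iUnion, mem_ofPred_eq]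
      constructor
      · intro h
        obtain ⟨n, hn⟩ := exists_nat_one_div_lt (sub_pos.2 h)
        exact ⟨n, by linarith⟩
      · rintro ⟨n, hn⟩
        have : (0:ℝ) < 1 / ((n:ℝ) + 1) := by positivity
        linarith
    rw [e, Monotone.measure_iUnion]
    · refine iSup_le fun n => ?_
      have : t < t + 1 / ((n:ℝ) + 1) := by
        have : (0:ℝ) < 1 / ((n:ℝ) + 1) := by positivity
        linarith
      obtain ⟨s, hs, hst⟩ := exists_lt_of_csInf_lt hne this
      exact (measure_mono fun x hx => hst.trans hx).trans hs.2
    · intro a b hab x hx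
      have : 1 / ((b:ℝ) + 1) ≤ 1 / ((a:ℝ) + 1) := by
        have : (a:ℝ) ≤ b := by exact_mod_cast hab
        gcongr
      simp only [mem_ofPred_eq] at hx ⊢
      linarith
  have hlo : ENNReal.ofReal κ ≤ μ {x | t ≤ W x} := by
    rcases hft.eq_or_lt with h | h
    · have : {x | t ≤ W x} = univ := by
        ext x; simp [← h, hf x]
      rw [this, hprob]
      simpa using hκ1
    · have e : {x | t ≤ W x} = ⋂ n : ℕ, {x | t - 1 / ((n:ℝ) + 1) < W x} := by
        ext x
        simp only [mem_iInter, mem_ofPred_eq]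
        constructor
        · intro h n
          have : (0:ℝ) < 1 / ((n:ℝ) + 1) := by positivity
          linarith
        · intro hn
          by_contra hc
          push Not at hc
          obtain ⟨n, hn'⟩ := exists_nat_one_div_lt (sub_pos.2 hc)
          linarith [hn n]
      have hanti : Antitone fun n : ℕ => {x | t - 1 / ((n:ℝ) + 1) < W x} := by
        intro a b hab x hx
        have : 1 / ((b:ℝ) + 1) ≤ 1 / ((a:ℝ) + 1) := by
          have : (a:ℝ) ≤ b := by exact_mod_cast hab
          gcongr
        simp only [mem_ofPred_eq] at hx ⊢
        linarith
      rw [e, hanti.measure_iInter (fun n => (hmeas _).nullMeasurableSet) ⟨0, measure_ne_top _ _⟩]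
      refine le_iInf fun n => ?_
      have hlt : max f (t - 1 / ((n:ℝ) + 1)) < t := by
        have : (0:ℝ) < 1 / ((n:ℝ) + 1) := by positivity
        exact max_lt h (by linarith)
      have hnot := notMem_of_lt_csInf hlt hbdd
      have : ENNReal.ofReal κ < μ {x | max f (t - 1 / ((n:ℝ) + 1)) < W x} := by
        by_contra hc
        exact hnot ⟨le_max_left _ _, not_lt.1 hc⟩
      exact this.le.trans (measure_mono fun x hx =>
        lt_of_le_of_lt (le_max_right f (t - 1 / ((n:ℝ) + 1))) (show _ < W x from hx))
  let S : ℝ → Set ℝ := fun s => {x | t < W x} ∪ ({x | t ≤ W x} ∩ Iio s)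
  have hSm : ∀ s, MeasurableSet (S s) := fun s =>
    (hmeas t).union ((hmeas' t).inter measurableSet_Iio)
  have hlip : LipschitzWith 1 (fun s => μ.real (S s)) := by
    refine LipschitzWith.of_le_add fun a b => ?_
    have hsub : S a ⊆ S b ∪ Ico b a := by
      rintro x (hx | ⟨hx, hxa⟩)
      · exact Or.inl (Or.inl hx)
      · rcases lt_or_ge x b with h | h
        · exact Or.inl (Or.inr ⟨hx, h⟩)
        · exact Or.inr ⟨h, hxa⟩
    calc μ.real (S a) ≤ μ.real (S b ∪ Ico b a) := measureReal_mono hsub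
      _ ≤ μ.real (S b) + μ.real (Ico b a) := measureReal_union_le _ _
      _ ≤ μ.real (S b) + dist a b := by
        gcongr
        calc μ.real (Ico b a) ≤ volume.real (Ico b a) := by
              refine ENNReal.toReal_mono measure_Ico_lt_top.ne ?_
              exact Measure.restrict_apply_le _ _
          _ ≤ dist a b := by
              rw [Real.volume_real_Ico, Real.dist_eq]
              exact max_le (le_abs_self _) (abs_nonneg _)
  have hS0 : μ.real (S 0) ≤ κ := by
    have : μ (S 0) ≤ ENNReal.ofReal κ := by
      refine le_trans ?_ hup
      have hz : μ ({x | t ≤ W x} ∩ Iio 0) = 0 := by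
        refine measure_mono_null inter_subset_right ?_
        rw [hμ, Measure.restrict_apply measurableSet_Iio]
        have : Iio (0:ℝ) ∩ Ico 0 1 = ∅ := by
          ext x; simp only [mem_inter_iff, mem_Iio, mem_Ico, mem_empty_iff_false, iff_false]
          rintro ⟨h1, h2, _⟩; linarith
        rw [this, measure_empty]
      exact (measure_union_le _ _).trans (by rw [hz, add_zero])
    exact ENNReal.toReal_le_of_le_ofReal hκ0.le this
  have hS1 : κ ≤ μ.real (S 1) := by
    have : ENNReal.ofReal κ ≤ μ (S 1) := by
      refine hlo.trans ?_
      rw [hμ, Measure.restrict_apply (hmeas' t), Measure.restrict_apply (hSm 1)]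
      refine measure_mono ?_
      rintro x ⟨h1, h2⟩
      exact ⟨Or.inr ⟨h1, h2.2⟩, h2⟩
    exact (ENNReal.ofReal_le_iff_le_toReal (measure_ne_top _ _)).1 this
  obtain ⟨s, -, hs⟩ := intermediate_value_Icc (zero_le_one (α := ℝ)) hlip.continuous.continuousOn
    ⟨hS0, hS1⟩
  refine ⟨t, hft, S s ∩ Ico 0 1, (hSm s).inter measurableSet_Ico, inter_subset_right, ?_, ?_, ?_⟩
  · rw [← Measure.restrict_apply (hSm s), ← hμ, ← hs]
    simp only [ofReal_measureReal (measure_ne_top μ _)]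
  · rintro x ⟨hx | hx, _⟩
    · exact le_of_lt hx
    · exact hx.1
  · rintro x ⟨hx, hx'⟩
    by_contra hc
    push Not at hc
    exact hx' ⟨Or.inl hc, hx⟩

lemma opt (p A F f κ c t : ℝ) (hp : 1 < p) (hf : 0 < f) (hκ : 0 < κ) (hA : 0 < A)
    (hc : c = (p - 1) / p * A) (ht : 0 < t) :
    A * (F - c ^ (p - 1) * f ^ p / (p * κ ^ (p - 1))) ≤
      κ * t ^ p + A * F - A * t ^ (p - 1) * f := by
  have hp1 : 0 < p - 1 := by linarith
  have hp0 : 0 < p := by linarith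
  have hc0 : 0 < c := by rw [hc]; positivity
  have hY := stepDoob p hp (c * f / κ) t ht
  have ha : 0 < c * f / κ := by positivity
  have hq : (Real.HolderConjugate p (p / (p - 1))) := Real.HolderConjugate.conjExponent hp
  have hY := Real.young_inequality_of_nonneg (a := c * f / κ) (b := t ^ (p - 1)) ha.le
      (by positivity) hq
  rw [← Real.rpow_mul ht.le, mul_div_cancel₀ _ (by linarith)] at hY
  have e1 : (c * f / κ) ^ p = c ^ (p - 1) * f ^ p / κ ^ (p - 1) * (c / κ) := by
    rw [Real.div_rpow (by positivity) hκ.le, Real.mul_rpow hc0.le hf.le, pow_split hc0.le hp,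
      pow_split hκ.le hp]
    field_simp
  rw [e1] at hY
  set Z := c ^ (p - 1) * f ^ p / κ ^ (p - 1) with hZ
  have e2 : c ^ (p - 1) * f ^ p / (p * κ ^ (p - 1)) = Z / p := by
    rw [hZ]; field_simp
  rw [e2]
  have h3 := mul_le_mul_of_nonneg_left hY (show 0 ≤ κ * p / (p - 1) by positivity)
  have e3 : κ * p / (p - 1) * (c * f / κ * t ^ (p - 1)) = A * t ^ (p - 1) * f := by
    rw [hc]; field_simp
  have e4 : κ * p / (p - 1) * (Z * (c / κ) / p + t ^ p / (p / (p - 1))) = A * (Z / p) + κ * t ^ p := by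
    rw [hc]; field_simp
  rw [e3, e4] at h3
  linarith

lemma opt_eq (p A F f κ c t : ℝ) (hp : 1 < p) (hf : 0 < f) (hκ : 0 < κ) (hA : 0 < A)
    (hc : c = (p - 1) / p * A) (ht : t = c * f / κ) :
    A * (F - c ^ (p - 1) * f ^ p / (p * κ ^ (p - 1))) =
      κ * t ^ p + A * F - A * t ^ (p - 1) * f := by
  have hp1 : 0 < p - 1 := by linarith
  have hp0 : 0 < p := by linarith
  have hc0 : 0 < c := by rw [hc]; positivity
  rw [ht]
  have ha : 0 < c * f / κ := by positivity
  rw [pow_split ha.le hp]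
  rw [Real.div_rpow (by positivity) hκ.le, Real.mul_rpow hc0.le hf.le, pow_split hf.le hp]
  have hA' : A = p / (p - 1) * c := by rw [hc]; field_simp
  rw [hA']
  field_simp
  ring

lemma supMeas_congr (N : ℕ) (hN : 2 ≤ N) (p κ : ℝ) (φ ψ : ℝ → ℝ)
    (h : ∀ x ∈ Ico (0:ℝ) 1, φ x = ψ x) : supMeas N p κ φ = supMeas N p κ ψ := by
  have : adicMax N φ = adicMax N ψ := by
    funext x
    unfold adicMax
    congr 1
    ext r
    refine exists_congr fun m => exists_congr fun k => ?_
    refine and_congr_right fun hk => and_congr_right fun _ => ?_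
    have : adicAvg N φ m k = adicAvg N ψ m k := by
      unfold adicAvg
      congr 1
      refine setIntegral_congr_fun (meas_itv N m k) fun y hy => ?_
      simp only [h y (itv_sub hN hk hy)]
    rw [this]
  unfold supMeas
  rw [this]

lemma low_final {N : ℕ} (hN : 2 ≤ N) (p A F f κ c : ℝ) (hp : 1 < p)
    (hA : A = ((N : ℝ) ^ p - 1) / ((N : ℝ) ^ p - N)) (hf : 0 < f) (hF : 0 < F) (hκ : 0 < κ)
    (hκ1 : κ ≤ 1)
    (hc : c = (p - 1) / p * A) (φ : ℝ → ℝ) (hm : Measurable φ) (h0 : ∀ x ∈ Ico (0:ℝ) 1, 0 ≤ φ x)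
    (h1 : ∫ x in Ico (0:ℝ) 1, φ x = f) (h2 : ∫ x in Ico (0:ℝ) 1, φ x ^ p = F) :
    A * (F - c ^ (p - 1) * f ^ p / (p * κ ^ (p - 1))) ≤ supMeas N p κ φ := by
  have hA0 : 0 < A := by
    have h1 := N_lt N hN p hp
    have h2 : (2:ℝ) ≤ N := by exact_mod_cast hN
    rw [hA]; exact div_pos (by linarith) (by linarith)
  set ψ : ℝ → ℝ := (Ico (0:ℝ) 1).indicator φ with hψ
  have hψe : ∀ x ∈ Ico (0:ℝ) 1, φ x = ψ x := fun x hx => (indicator_of_mem hx φ).symm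
  rw [supMeas_congr N hN p κ φ ψ hψe]
  have hψ0 : ∀ x, 0 ≤ ψ x := fun x => indicator_nonneg h0 x
  have hψm : Measurable ψ := hm.indicator measurableSet_Ico
  have hφi : IntegrableOn φ (Ico 0 1) := by
    by_contra hc
    rw [integral_undef hc] at h1
    linarith
  have hφpi : IntegrableOn (fun x => φ x ^ p) (Ico 0 1) := by
    by_contra hc
    rw [integral_undef hc] at h2
    linarith
  have hψi : Integrable ψ := hφi.integrable_indicator measurableSet_Ico
  have h1' : ∫ x in Ico (0:ℝ) 1, ψ x = f := by
    rw [← h1]; exact setIntegral_congr_fun measurableSet_Ico fun x hx => (hψe x hx).symm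
  have h2' : ∫ x in Ico (0:ℝ) 1, ψ x ^ p = F := by
    rw [← h2]; exact setIntegral_congr_fun measurableSet_Ico fun x hx => by simp only [hψe x hx]
  have hψpi : IntegrableOn (fun x => ψ x ^ p) (Ico 0 1) :=
    hφpi.congr_fun (fun x hx => by simp only [hψe x hx]) measurableSet_Ico
  have hf' : 0 < ∫ x in Ico (0:ℝ) 1, ψ x := by rw [h1']; exact hf
  obtain ⟨hb, hi⟩ := max_bdd hN p hp hψ0 hψi hψpi hf'
  have hM0 : ∀ x ∈ Ico (0:ℝ) 1, 0 ≤ adicMax N ψ x := fun x hx => by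
    rw [max_eq hN ψ hx]; exact Real.iSup_nonneg fun m => X_nonneg N ψ m x
  have hWm : Measurable fun x => max f (⨆ m, X N ψ m x) :=
    measurable_const.max (Measurable.iSup fun m => meas_idx N m _)
  obtain ⟨t, hft, E, hEm, hEs, hEv, hE1, hE2⟩ :=
    exists_top _ hWm f κ (fun x => le_max_left _ _) hκ hκ1
  have ht0 : 0 < t := hf.trans_le hft
  have hae : ∀ᵐ x ∂volume.restrict (Ico (0:ℝ) 1), max f (⨆ m, X N ψ m x) = adicMax N ψ x := by
    filter_upwards [hb, ae_restrict_mem measurableSet_Ico] with x hbx hx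
    rw [max_eq hN ψ hx, max_eq_right]
    rw [← h1', ← X_zero (N := N) hψ0 hx]
    exact le_ciSup hbx 0
  have hEr : volume.real E = κ := by
    rw [Measure.real, hEv, ENNReal.toReal_ofReal hκ.le]
  have hlow := low_main hN p A hp hA hψ0 hψm hψi hψpi hf' (l := t) (by rw [h1']; exact hft)
  rw [h1', h2'] at hlow
  have hsplit : ∫ x in Ico (0:ℝ) 1, (max t (adicMax N ψ x)) ^ p =
      (∫ x in E, adicMax N ψ x ^ p) + (1 - κ) * t ^ p := by
    have e1 : ∫ x in E, (max t (adicMax N ψ x)) ^ p = ∫ x in E, adicMax N ψ x ^ p := by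
      refine setIntegral_congr_ae₀ hEm.nullMeasurableSet ?_
      rw [ae_restrict_iff' measurableSet_Ico] at hae
      filter_upwards [hae] with x hx hxE
      have := hE1 x hxE
      rw [hx (hEs hxE)] at this
      rw [max_eq_right this]
    have e2 : ∫ x in Ico (0:ℝ) 1 \ E, (max t (adicMax N ψ x)) ^ p = (1 - κ) * t ^ p := by
      have : ∫ x in Ico (0:ℝ) 1 \ E, (max t (adicMax N ψ x)) ^ p =
          ∫ x in Ico (0:ℝ) 1 \ E, t ^ p := by
        refine setIntegral_congr_ae₀ (measurableSet_Ico.diff hEm).nullMeasurableSet ?_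
        rw [ae_restrict_iff' measurableSet_Ico] at hae
        filter_upwards [hae] with x hx hxE
        have := hE2 x hxE
        rw [hx hxE.1] at this
        rw [max_eq_left this]
      rw [this, setIntegral_const, measureReal_sdiff hEs hEm measure_Ico_lt_top.ne, hEr]
      simp
    have hdis : Disjoint E (Ico (0:ℝ) 1 \ E) := disjoint_sdiff_self_right
    have hun : E ∪ (Ico (0:ℝ) 1 \ E) = Ico 0 1 := union_sdiff_cancel hEs
    have himax : IntegrableOn (fun x => (max t (adicMax N ψ x)) ^ p) (Ico 0 1) := by
      have hc : IntegrableOn (fun _ : ℝ => t ^ p) (Ico (0:ℝ) 1) := by simp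
      refine (hc.sup hi).congr ?_
      filter_upwards [ae_restrict_mem measurableSet_Ico] with x hx
      rcases le_total t (adicMax N ψ x) with h | h
      · have := Real.rpow_le_rpow ht0.le h (z := p) (by linarith)
        simp [max_eq_right h, this]
      · have := Real.rpow_le_rpow (hM0 x hx) h (z := p) (by linarith)
        simp [max_eq_left h, this]
    rw [← e1, ← e2, ← setIntegral_union hdis (measurableSet_Ico.diff hEm)
      (himax.mono_set hEs) (himax.mono_set sdiff_subset), hun]
  have hbound : A * (F - c ^ (p - 1) * f ^ p / (p * κ ^ (p - 1))) ≤ ∫ x in E, adicMax N ψ x ^ p := by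
    have := opt p A F f κ c t hp hf hκ hA0 hc ht0
    linarith
  refine hbound.trans (le_csSup ?_ ⟨E, hEm, hEs, hEv, rfl⟩)
  refine ⟨∫ x in Ico (0:ℝ) 1, adicMax N ψ x ^ p, ?_⟩
  rintro _ ⟨E', hE'm, hE's, -, rfl⟩
  refine setIntegral_mono_set hi ?_ hE's.eventuallyLE
  filter_upwards [ae_restrict_mem measurableSet_Ico] with x hx
  exact Real.rpow_nonneg (hM0 x hx) p

end Adic

namespace Adic

/-- left pieces of the first `n` cells -/
def SS (N m n j : ℕ) : Set ℝ := ⋃ i ∈ Finset.range n, adicItv N (m + j) (i * N ^ j)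

/-- support of the high part -/
def AA (N m k n : ℕ) (r : ℝ) : Set ℝ :=
  SS N m n k ∪ Ico ((n:ℝ) / (N:ℝ) ^ m) ((n:ℝ) / (N:ℝ) ^ m + r)

/-- the near extremal function -/
noncomputable def ph (N m k n : ℕ) (r y α l : ℝ) (x : ℝ) : ℝ :=
  l * (N:ℝ) ^ k * (AA N m k n r).indicator (fun _ => (1:ℝ)) x
    + l * (Ico y α).indicator (fun _ => (1:ℝ)) x

lemma mem_SS {N m n j : ℕ} (hN : 2 ≤ N) {x : ℝ} (hx : 0 ≤ x) :
    x ∈ SS N m n j ↔ ∃ i < n, ⌊x * (N:ℝ) ^ (m + j)⌋₊ = i * N ^ j := by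
  simp only [SS, mem_iUnion, Finset.mem_range, exists_prop, mem_itv hN hx]

lemma SS_nonneg {N m n j : ℕ} {x : ℝ} (hx : x ∈ SS N m n j) : 0 ≤ x := by
  simp only [SS, mem_iUnion] at hx
  obtain ⟨i, _, h⟩ := hx
  exact itv_nonneg h

lemma meas_SS (N m n j : ℕ) : MeasurableSet (SS N m n j) :=
  Finset.measurableSet_biUnion _ fun _ _ => meas_itv _ _ _

lemma meas_AA (N m k n : ℕ) (r : ℝ) : MeasurableSet (AA N m k n r) :=
  (meas_SS _ _ _ _).union measurableSet_Ico

lemma SS_idx {N m n j : ℕ} (hN : 2 ≤ N) {x : ℝ} (hx : x ∈ SS N m n j) :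
    ⌊x * (N:ℝ) ^ m⌋₊ < n ∧ ⌊x * (N:ℝ) ^ (m + j)⌋₊ = ⌊x * (N:ℝ) ^ m⌋₊ * N ^ j := by
  obtain ⟨i, hi, h⟩ := (mem_SS hN (SS_nonneg hx)).1 hx
  have hp : 0 < N ^ j := by positivity
  rw [idx_add m j hN, h, Nat.mul_div_cancel _ hp]
  exact ⟨hi, rfl⟩

lemma SS_anti {N m n : ℕ} (hN : 2 ≤ N) : Antitone (SS N m n) := by
  refine antitone_nat_of_succ_le fun j x hx => ?_
  have h0 := SS_nonneg hx
  obtain ⟨i, hi, h⟩ := (mem_SS hN h0).1 hx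
  rw [mem_SS hN h0]
  refine ⟨i, hi, ?_⟩
  rw [idx_succ (m + j) hN, add_assoc, h, pow_succ, ← mul_assoc,
    Nat.mul_div_cancel _ (by omega)]

lemma vol_SS {N m n j : ℕ} (hN : 2 ≤ N) : volume.real (SS N m n j) = n / (N:ℝ) ^ (m + j) := by
  rw [SS, measureReal_biUnion_finset ?_ ?_ (h := fun _ _ => vol_itv_ne)]
  · simp [vol_itv]; ring
  · intro a _ b _ hab
    refine itv_disj hN univ (mem_univ _) (mem_univ _) ?_
    intro h
    exact hab (Nat.eq_of_mul_eq_mul_right (by positivity) h)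
  · exact fun _ _ => meas_itv _ _ _

lemma SS_fin {N m n j : ℕ} : volume (SS N m n j) ≠ ⊤ := by
  rw [SS]
  exact ((measure_biUnion_finset_le _ _).trans_lt
      (ENNReal.sum_lt_top.2 fun _ _ => vol_itv_ne.lt_top)).ne

lemma idx_ge {N m n : ℕ} (hN : 2 ≤ N) {x : ℝ} (h : (n:ℝ) / (N:ℝ) ^ m ≤ x) :
    n ≤ ⌊x * (N:ℝ) ^ m⌋₊ := by
  have hpos : (0:ℝ) < (N:ℝ) ^ m := by positivity
  rw [div_le_iff₀ hpos] at h
  exact Nat.le_floor h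

lemma idx_lt' {N m n : ℕ} (hN : 2 ≤ N) {x : ℝ} (hx : 0 ≤ x) (h : x < (n:ℝ) / (N:ℝ) ^ m) :
    ⌊x * (N:ℝ) ^ m⌋₊ < n := by
  have hpos : (0:ℝ) < (N:ℝ) ^ m := by positivity
  rw [lt_div_iff₀ hpos] at h
  exact (Nat.floor_lt (by positivity)).2 h

/-- standing hypotheses -/
structure Hyp (N m k n : ℕ) (r y α l : ℝ) : Prop where
  hN : 2 ≤ N
  hny : (n:ℝ) / (N:ℝ) ^ m ≤ y
  hyn : y < ((n:ℝ) + 1) / (N:ℝ) ^ m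
  hr : (N:ℝ) ^ k * r = y - (n:ℝ) / (N:ℝ) ^ m
  hyα : y ≤ α
  hα : α ≤ 1
  hl : 0 < l

namespace Hyp

variable {N m k n : ℕ} {r y α l : ℝ}

lemma r0 (H : Hyp N m k n r y α l) : 0 ≤ r := by
  have h1 := H.hny
  have h2 := H.hr
  have hN := H.hN
  have hpos : (0:ℝ) < (N:ℝ) ^ k := by positivity
  by_contra hc
  push Not at hc
  nlinarith [mul_pos_of_neg_of_neg hc (neg_lt_zero.2 hpos)]

lemma r1 (H : Hyp N m k n r y α l) : (n:ℝ) / (N:ℝ) ^ m + r ≤ y := by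
  have h2 := H.hr
  have hN := H.hN
  have hN1 : (1:ℝ) ≤ N := by exact_mod_cast (by omega : 1 ≤ N)
  have hpos : (1:ℝ) ≤ (N:ℝ) ^ k := one_le_pow₀ hN1
  nlinarith [H.r0]

lemma vol_AA (H : Hyp N m k n r y α l) : volume.real (AA N m k n r) = y / (N:ℝ) ^ k := by
  have hN := H.hN
  have hr0 := H.r0
  rw [AA, measureReal_union ?_ ?_ (h₁ := SS_fin) (h₂ := measure_Ico_lt_top.ne)]
  · rw [vol_SS H.hN, Real.volume_real_Ico_of_le (by linarith)]
    have h2 := H.hr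
    have hpos : (0:ℝ) < (N:ℝ) ^ k := by positivity
    have hpos' : (0:ℝ) < (N:ℝ) ^ m := by positivity
    have : y = (N:ℝ) ^ k * r + (n:ℝ) / (N:ℝ) ^ m := by linarith
    rw [this, pow_add]
    field_simp
    ring
  · rw [Set.disjoint_left]
    intro x hx hx'
    exact absurd (SS_idx H.hN hx).1 (not_lt.2 (idx_ge H.hN hx'.1))
  · exact measurableSet_Ico

lemma AA_sub (H : Hyp N m k n r y α l) : AA N m k n r ⊆ Ico 0 y := by
  rintro x (hx | hx)
  · have h0 := SS_nonneg hx
    refine ⟨h0, ?_⟩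
    by_contra hc
    push Not at hc
    exact absurd (SS_idx H.hN hx).1 (not_lt.2 (idx_ge H.hN (H.hny.trans hc)))
  · exact ⟨le_trans (by positivity) hx.1, hx.2.trans_le H.r1⟩

lemma AA_fin (H : Hyp N m k n r y α l) : volume (AA N m k n r) ≠ ⊤ :=
  ((measure_mono H.AA_sub).trans_lt measure_Ico_lt_top).ne

lemma meas_ph (N m k n : ℕ) (r y α l : ℝ) : Measurable (ph N m k n r y α l) := by
  unfold ph
  exact ((measurable_const.indicator (meas_AA N m k n r)).const_mul _).add
    ((measurable_const.indicator measurableSet_Ico).const_mul _)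

lemma ph_nonneg (H : Hyp N m k n r y α l) (x : ℝ) : 0 ≤ ph N m k n r y α l x := by
  have := H.hl
  unfold ph
  have a := indicator_nonneg (s := AA N m k n r) (f := fun _ => (1:ℝ)) (fun _ _ => zero_le_one) x
  have b := indicator_nonneg (s := Ico y α) (f := fun _ => (1:ℝ)) (fun _ _ => zero_le_one) x
  positivity

lemma ph_AA (H : Hyp N m k n r y α l) {x : ℝ} (hx : x ∈ AA N m k n r) :
    ph N m k n r y α l x = l * (N:ℝ) ^ k := by
  have : x ∉ Ico y α := fun h => absurd (H.AA_sub hx).2 (not_lt.2 h.1)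
  simp [ph, hx, this]

lemma ph_le (H : Hyp N m k n r y α l) {x : ℝ} (hx : x ∉ AA N m k n r) :
    ph N m k n r y α l x ≤ l := by
  have := H.hl
  simp only [ph, indicator_of_notMem hx]
  by_cases h : x ∈ Ico y α
  · simp [h]
  · simp [h, this.le]

lemma ph_le' (H : Hyp N m k n r y α l) (x : ℝ) :
    ph N m k n r y α l x ≤ l * (N:ℝ) ^ k := by
  by_cases hx : x ∈ AA N m k n r
  · rw [H.ph_AA hx]
  · refine (H.ph_le hx).trans ?_
    have hN := H.hN
    have hN1 : (1:ℝ) ≤ N := by exact_mod_cast (by omega : 1 ≤ N)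
    exact le_mul_of_one_le_right H.hl.le (one_le_pow₀ hN1)

lemma int_ph (H : Hyp N m k n r y α l) : Integrable (ph N m k n r y α l) := by
  unfold ph
  exact (((integrable_indicator_iff (meas_AA N m k n r)).2
    (integrableOn_const H.AA_fin)).const_mul _).add
    (((integrable_indicator_iff measurableSet_Ico).2
    (integrableOn_const measure_Ico_lt_top.ne)).const_mul _)

lemma set_int (H : Hyp N m k n r y α l) (I : Set ℝ) :
    ∫ x in I, |ph N m k n r y α l x| =
      l * (N:ℝ) ^ k * volume.real (AA N m k n r ∩ I) + l * volume.real (Ico y α ∩ I) := by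
  simp only [abs_of_nonneg (H.ph_nonneg _)]
  unfold ph
  have i1 : IntegrableOn ((AA N m k n r).indicator (fun _ => (1:ℝ))) I :=
    ((integrable_indicator_iff (meas_AA N m k n r)).2 (integrableOn_const H.AA_fin)).integrableOn
  have i2 : IntegrableOn ((Ico y α).indicator (fun _ => (1:ℝ))) I :=
    ((integrable_indicator_iff measurableSet_Ico).2
    (integrableOn_const measure_Ico_lt_top.ne)).integrableOn
  rw [integral_add (i1.const_mul _) (i2.const_mul _), integral_const_mul, integral_const_mul,
    integral_indicator_const _ (meas_AA N m k n r), integral_indicator_const _ measurableSet_Ico,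
    measureReal_restrict_apply (meas_AA N m k n r), measureReal_restrict_apply measurableSet_Ico]
  simp

lemma y0 (H : Hyp N m k n r y α l) : 0 ≤ y := le_trans (by positivity) H.hny

lemma mean (H : Hyp N m k n r y α l) :
    ∫ x in Ico (0:ℝ) 1, ph N m k n r y α l x = l * α := by
  have h := H.set_int (Ico 0 1)
  simp only [abs_of_nonneg (H.ph_nonneg _)] at h
  have hN := H.hN
  have hpos : (0:ℝ) < (N:ℝ) ^ k := by positivity
  rw [h, inter_eq_left.2 (H.AA_sub.trans (Ico_subset_Ico_right (H.hyα.trans H.hα))),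
    inter_eq_left.2 (Ico_subset_Ico H.y0 H.hα), H.vol_AA, Real.volume_real_Ico_of_le H.hyα]
  field_simp
  ring

lemma pmean (H : Hyp N m k n r y α l) (p : ℝ) (hp : 1 < p) :
    ∫ x in Ico (0:ℝ) 1, ph N m k n r y α l x ^ p =
      l ^ p * (α + y * (((N:ℝ) ^ p / N) ^ k - 1)) := by
  have hN := H.hN
  have hl := H.hl
  have hpos : (0:ℝ) < (N:ℝ) ^ k := by positivity
  have e : ∀ x, ph N m k n r y α l x ^ p =
      (l * (N:ℝ) ^ k) ^ p * (AA N m k n r).indicator (fun _ => (1:ℝ)) x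
      + l ^ p * (Ico y α).indicator (fun _ => (1:ℝ)) x := by
    intro x
    by_cases hx : x ∈ AA N m k n r
    · have : x ∉ Ico y α := fun h => absurd (H.AA_sub hx).2 (not_lt.2 h.1)
      rw [H.ph_AA hx]
      simp [hx, this]
    · simp only [ph, indicator_of_notMem hx]
      by_cases h : x ∈ Ico y α
      · simp [h]
      · simp [h, Real.zero_rpow (by linarith : p ≠ 0)]
  simp only [e]
  have i1 : IntegrableOn ((AA N m k n r).indicator (fun _ => (1:ℝ))) (Ico 0 1) :=
    ((integrable_indicator_iff (meas_AA N m k n r)).2 (integrableOn_const H.AA_fin)).integrableOn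
  have i2 : IntegrableOn ((Ico y α).indicator (fun _ => (1:ℝ))) (Ico 0 1) :=
    ((integrable_indicator_iff measurableSet_Ico).2
    (integrableOn_const measure_Ico_lt_top.ne)).integrableOn
  rw [integral_add (i1.const_mul _) (i2.const_mul _), integral_const_mul, integral_const_mul,
    integral_indicator_const _ (meas_AA N m k n r), integral_indicator_const _ measurableSet_Ico,
    measureReal_restrict_apply (meas_AA N m k n r), measureReal_restrict_apply measurableSet_Ico,
    inter_eq_left.2 (H.AA_sub.trans (Ico_subset_Ico_right (H.hyα.trans H.hα))),
    inter_eq_left.2 (Ico_subset_Ico H.y0 H.hα), H.vol_AA, Real.volume_real_Ico_of_le H.hyα,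
    Real.mul_rpow hl.le hpos.le, div_pow, ← Real.rpow_natCast_mul (by positivity),
    ← Real.rpow_mul_natCast (by positivity), mul_comm (k:ℝ) p]
  simp only [smul_eq_mul, mul_one]
  field_simp
  ring

/-- averages over cells -/
lemma cell (H : Hyp N m k n r y α l) (i : ℕ) :
    ∫ x in adicItv N m i, |ph N m k n r y α l x| ≤ l / (N:ℝ) ^ m := by
  have hN := H.hN
  have hl := H.hl
  have hpos : (0:ℝ) < (N:ℝ) ^ k := by positivity
  have hposm : (0:ℝ) < (N:ℝ) ^ m := by positivity
  rw [H.set_int]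
  rcases lt_trichotomy i n with hi | hi | hi
  · have h1 : volume.real (AA N m k n r ∩ adicItv N m i) ≤ 1 / (N:ℝ) ^ (m + k) := by
      rw [← vol_itv (N := N) (m := m + k) (k := i * N ^ k)]
      refine measureReal_mono ?_ vol_itv_ne
      rintro x ⟨hx | hx, hxi⟩
      · have h0 := itv_nonneg hxi
        rw [mem_itv hN h0] at hxi ⊢
        rw [(SS_idx hN hx).2, hxi]
      · have h0 := itv_nonneg hxi
        rw [mem_itv hN h0] at hxi
        have := idx_ge hN hx.1
        omega
    have h2 : Ico y α ∩ adicItv N m i = ∅ := by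
      ext x
      simp only [mem_inter_iff, mem_empty_iff_false, iff_false]
      rintro ⟨hx, hxi⟩
      have h0 := itv_nonneg hxi
      rw [mem_itv hN h0] at hxi
      have := idx_ge hN (H.hny.trans hx.1)
      omega
    rw [h2, measureReal_empty]
    have := mul_le_mul_of_nonneg_left h1 (by positivity : 0 ≤ l * (N:ℝ) ^ k)
    refine (by linarith : _ ≤ l * (N:ℝ) ^ k * (1 / (N:ℝ) ^ (m + k))).trans (le_of_eq ?_)
    rw [pow_add]; field_simp
  · subst hi
    have h1 : volume.real (AA N m k i r ∩ adicItv N m i) ≤ r := by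
      have : volume.real (Ico ((i:ℝ) / (N:ℝ) ^ m) ((i:ℝ) / (N:ℝ) ^ m + r)) = r := by
        rw [Real.volume_real_Ico_of_le (by linarith [H.r0])]; ring
      refine le_of_le_of_eq ?_ this
      refine measureReal_mono ?_ measure_Ico_lt_top.ne
      rintro x ⟨hx | hx, hxi⟩
      · have h0 := itv_nonneg hxi
        rw [mem_itv hN h0] at hxi
        have := (SS_idx hN hx).1
        omega
      · exact hx
    have h2 : volume.real (Ico y α ∩ adicItv N m i) ≤ ((i:ℝ) + 1) / (N:ℝ) ^ m - y := by
      rw [← Real.volume_real_Ico_of_le H.hyn.le]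
      refine measureReal_mono ?_ measure_Ico_lt_top.ne
      rintro x ⟨hx, hxi⟩
      exact ⟨hx.1, hxi.2⟩
    have e := H.hr
    have a1 := mul_le_mul_of_nonneg_left h1 (by positivity : 0 ≤ l * (N:ℝ) ^ k)
    have a2 := mul_le_mul_of_nonneg_left h2 hl.le
    have a3 : l * (N:ℝ) ^ k * r = l * (y - (i:ℝ) / (N:ℝ) ^ m) := by rw [← e]; ring
    have a4 : l * (y - (i:ℝ) / (N:ℝ) ^ m) + l * (((i:ℝ) + 1) / (N:ℝ) ^ m - y) = l / (N:ℝ) ^ m := by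
      ring
    linarith
  · have h1 : AA N m k n r ∩ adicItv N m i = ∅ := by
      ext x
      simp only [mem_inter_iff, mem_empty_iff_false, iff_false]
      rintro ⟨hx, hxi⟩
      have h0 := itv_nonneg hxi
      rw [mem_itv hN h0] at hxi
      have h3 := (H.AA_sub hx).2.trans H.hyn
      have := idx_lt' (n := n + 1) hN h0 (by push_cast; exact h3)
      omega
    have h2 : volume.real (Ico y α ∩ adicItv N m i) ≤ 1 / (N:ℝ) ^ m := by
      rw [← vol_itv (N := N) (m := m) (k := i)]
      exact measureReal_mono inter_subset_right vol_itv_ne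
    rw [h1, measureReal_empty]
    have a2 := mul_le_mul_of_nonneg_left h2 hl.le
    rw [mul_one_div] at a2
    linarith

lemma coarse (H : Hyp N m k n r y α l) (m0 d i : ℕ) (hm : m = m0 + d) :
    ∫ x in adicItv N m0 i, |ph N m k n r y α l x| ≤ l / (N:ℝ) ^ m0 := by
  have hN := H.hN
  have e : adicItv N m0 i = ⋃ j ∈ Finset.Ico (i * N ^ d) ((i + 1) * N ^ d), adicItv N m j := by
    ext x
    simp only [mem_iUnion, exists_prop, Finset.mem_Ico]
    have hp : 0 < N ^ d := by positivity
    constructor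
    · intro hx
      have h0 := itv_nonneg hx
      refine ⟨_, ?_, (mem_itv hN h0).2 rfl⟩
      rw [mem_itv hN h0, idx_add m0 d hN, ← hm, Nat.div_eq_iff hp] at hx
      have : (i + 1) * N ^ d = i * N ^ d + N ^ d := by ring
      omega
    · rintro ⟨j, hj, hx⟩
      have h0 := itv_nonneg hx
      rw [mem_itv hN h0] at hx ⊢
      rw [idx_add m0 d hN, ← hm, hx, Nat.div_eq_iff hp]
      have : (i + 1) * N ^ d = i * N ^ d + N ^ d := by ring
      omega
  rw [e, integral_biUnion_finset _ (fun _ _ => meas_itv _ _ _) (itv_disj hN _)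
    (fun _ _ => H.int_ph.abs.integrableOn)]
  refine (Finset.sum_le_sum fun j _ => H.cell j).trans ?_
  rw [Finset.sum_const, Nat.card_Ico, nsmul_eq_mul, hm, pow_add]
  have : (i + 1) * N ^ d - i * N ^ d = N ^ d := by
    rw [add_mul, one_mul, Nat.add_sub_cancel_left]
  rw [this]
  have hpos : (0:ℝ) < (N:ℝ) ^ d := by positivity
  have hpos' : (0:ℝ) < (N:ℝ) ^ m0 := by positivity
  push_cast
  refine le_of_eq ?_
  field_simp

lemma avg_of_le (H : Hyp N m k n r y α l) (M i : ℕ) (C : ℝ)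
    (hC : ∀ x ∈ adicItv N M i, ph N m k n r y α l x ≤ C) :
    adicAvg N (ph N m k n r y α l) M i ≤ C := by
  have hN := H.hN
  have hpos : (0:ℝ) < (N:ℝ) ^ M := by positivity
  unfold adicAvg
  have : ∫ x in adicItv N M i, |ph N m k n r y α l x| ≤ ∫ x in adicItv N M i, C := by
    refine setIntegral_mono_on H.int_ph.abs.integrableOn (integrableOn_const vol_itv_ne)
      (meas_itv _ _ _) fun x hx => ?_
    rw [abs_of_nonneg (H.ph_nonneg x)]; exact hC x hx
  rw [setIntegral_const, vol_itv, smul_eq_mul] at this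
  calc _ ≤ (N:ℝ) ^ M * (1 / (N:ℝ) ^ M * C) := mul_le_mul_of_nonneg_left this hpos.le
    _ = C := by field_simp

lemma trichotomy (H : Hyp N m k n r y α l) {x : ℝ} (hx : x ∈ Ico (0:ℝ) 1) (M : ℕ) :
    X N (ph N m k n r y α l) M x ≤ l ∨
    (∃ j ≤ k, x ∈ SS N m n j ∧ X N (ph N m k n r y α l) M x ≤ l * (N:ℝ) ^ j) ∨
    (x ∈ adicItv N m n ∧ X N (ph N m k n r y α l) M x ≤ l * (N:ℝ) ^ k) := by
  have hN := H.hN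
  have hl := H.hl
  rcases le_total M m with hM | hM
  · left
    obtain ⟨d, hd⟩ := Nat.exists_eq_add_of_le hM
    have := H.coarse M d ⌊x * (N:ℝ) ^ M⌋₊ hd
    have hpos : (0:ℝ) < (N:ℝ) ^ M := by positivity
    rw [le_div_iff₀ hpos, mul_comm] at this
    exact this
  obtain ⟨j, rfl⟩ := Nat.exists_eq_add_of_le hM
  by_cases hcell : ⌊x * (N:ℝ) ^ m⌋₊ = n
  · right; right
    exact ⟨(mem_itv hN hx.1).2 hcell, H.avg_of_le _ _ _ fun z _ => H.ph_le' z⟩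
  by_cases hex : ∃ z ∈ adicItv N (m + j) ⌊x * (N:ℝ) ^ (m + j)⌋₊, z ∈ AA N m k n r
  · right; left
    obtain ⟨z, hz, hzA⟩ := hex
    have hz0 := itv_nonneg hz
    rw [mem_itv hN hz0] at hz
    have hzm : ⌊z * (N:ℝ) ^ m⌋₊ = ⌊x * (N:ℝ) ^ m⌋₊ := by
      rw [idx_add m j hN, hz, ← idx_add m j hN]
    have hzS : z ∈ SS N m n k := by
      rcases hzA with h | h
      · exact h
      · exfalso
        have h1 := idx_ge hN h.1
        have h2 := idx_lt' (n := n + 1) hN hz0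
          (by push_cast; exact (h.2.trans_le H.r1).trans H.hyn)
        omega
    obtain ⟨h1, h2⟩ := SS_idx hN hzS
    rcases le_total j k with hjk | hjk
    · have hzj : z ∈ SS N m n j := SS_anti hN hjk hzS
      obtain ⟨h3, h4⟩ := SS_idx hN hzj
      have hxj : ⌊x * (N:ℝ) ^ (m + j)⌋₊ = ⌊x * (N:ℝ) ^ m⌋₊ * N ^ j := by
        rw [← hz, h4, hzm]
      refine ⟨j, hjk, (mem_SS hN hx.1).2 ⟨_, by rw [← hzm]; exact h3, hxj⟩, ?_⟩
      unfold X adicAvg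
      have hsub : adicItv N (m + j) ⌊x * (N:ℝ) ^ (m + j)⌋₊ ⊆ adicItv N m ⌊x * (N:ℝ) ^ m⌋₊ := by
        intro w hw
        have hw0 := itv_nonneg hw
        rw [mem_itv hN hw0] at hw ⊢
        rw [idx_add m j hN, hw, ← idx_add m j hN]
      have h5 : ∫ w in adicItv N (m + j) ⌊x * (N:ℝ) ^ (m + j)⌋₊, |ph N m k n r y α l w| ≤
          l / (N:ℝ) ^ m := by
        refine le_trans ?_ (H.cell ⌊x * (N:ℝ) ^ m⌋₊)
        exact setIntegral_mono_set H.int_ph.abs.integrableOn (ae_of_all _ fun _ => abs_nonneg _)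
          hsub.eventuallyLE
      have hpos : (0:ℝ) < (N:ℝ) ^ m := by positivity
      calc _ ≤ (N:ℝ) ^ (m + j) * (l / (N:ℝ) ^ m) :=
            mul_le_mul_of_nonneg_left h5 (by positivity)
        _ = _ := by rw [pow_add]; field_simp
    · refine ⟨k, le_rfl, ?_, H.avg_of_le _ _ _ fun z _ => H.ph_le' z⟩
      obtain ⟨d, rfl⟩ := Nat.exists_eq_add_of_le hjk
      refine (mem_SS hN hx.1).2 ⟨⌊z * (N:ℝ) ^ m⌋₊, h1, ?_⟩
      rw [← h2, idx_add (m + k) d hN, idx_add (m + k) d hN z, add_assoc, hz]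
  · left
    push Not at hex
    exact H.avg_of_le _ _ _ fun z hz => H.ph_le (hex z hz)

end Hyp

end Adic

namespace Adic

/-- pointwise majorant -/
noncomputable def HH (N m k n : ℕ) (P L : ℝ) (x : ℝ) : ℝ :=
  L * (1 + ∑ j ∈ Finset.range k, (P ^ (j + 1) - P ^ j) *
    (SS N m n (j + 1)).indicator (fun _ => (1:ℝ)) x)
    + L * P ^ k * (adicItv N m n).indicator (fun _ => (1:ℝ)) x

lemma geo (k : ℕ) (P N : ℝ) (hN : 1 < N) (hP : N < P) :
    ∑ j ∈ Finset.range k, (P ^ (j + 1) - P ^ j) / N ^ (j + 1) =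
      (P - 1) / (P - N) * ((P / N) ^ k - 1) := by
  have h1 : P - N ≠ 0 := by linarith
  have h2 : N ≠ 0 := by linarith
  induction k with
  | zero => simp
  | succ k ih =>
    rw [Finset.sum_range_succ, ih, div_pow, div_pow]
    field_simp
    ring

namespace Hyp

variable {N m k n : ℕ} {r y α l : ℝ}

lemma max_rpow_le (H : Hyp N m k n r y α l) (p : ℝ) (hp : 1 < p) {x : ℝ}
    (hx : x ∈ Ico (0:ℝ) 1) :
    adicMax N (ph N m k n r y α l) x ^ p ≤ HH N m k n ((N:ℝ) ^ p) (l ^ p) x := by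
  have hN := H.hN
  have hl := H.hl
  have hNP := N_lt N hN p hp
  set P : ℝ := (N:ℝ) ^ p with hPdef
  have hN1 : (1:ℝ) ≤ N := by exact_mod_cast (by omega : 1 ≤ N)
  have hP1 : 1 ≤ P := by linarith
  have hL : 0 < l ^ p := Real.rpow_pos_of_pos hl p
  have hpw : ∀ j : ℕ, (l * (N:ℝ) ^ j) ^ p = l ^ p * P ^ j := by
    intro j
    rw [Real.mul_rpow hl.le (by positivity), ← Real.rpow_natCast_mul (by positivity), hPdef,
      ← Real.rpow_mul_natCast (by positivity), mul_comm (j:ℝ) p]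
  have hnn : ∀ j, 0 ≤ P ^ (j + 1) - P ^ j := fun j =>
    sub_nonneg.2 (pow_le_pow_right₀ hP1 (Nat.le_succ j))
  have hs0 : ∀ s : Finset ℕ, 0 ≤ ∑ j ∈ s, (P ^ (j + 1) - P ^ j) *
    (SS N m n (j + 1)).indicator (fun _ => (1:ℝ)) x := fun s =>
      Finset.sum_nonneg fun j _ => mul_nonneg (hnn j)
        (indicator_nonneg (fun _ _ => zero_le_one) x)
  have hi0 : 0 ≤ l ^ p * P ^ k * (adicItv N m n).indicator (fun _ => (1:ℝ)) x :=
    mul_nonneg (by positivity) (indicator_nonneg (fun _ _ => zero_le_one) x)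
  have hH0 : 0 ≤ HH N m k n P (l ^ p) x := by
    have := hs0 (Finset.range k)
    unfold HH
    positivity
  have key : ∀ M, X N (ph N m k n r y α l) M x ^ p ≤ HH N m k n P (l ^ p) x := by
    intro M
    have hX := X_nonneg N (ph N m k n r y α l) M x
    rcases H.trichotomy hx M with h | ⟨j, hj, hxj, h⟩ | ⟨hxn, h⟩
    · refine (Real.rpow_le_rpow hX h (by linarith)).trans ?_
      have := mul_nonneg hL.le (hs0 (Finset.range k))
      unfold HH
      linarith
    · refine (Real.rpow_le_rpow hX h (by linarith)).trans ?_
      rw [hpw]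
      have h1 : P ^ j - 1 ≤ ∑ i ∈ Finset.range k, (P ^ (i + 1) - P ^ i) *
          (SS N m n (i + 1)).indicator (fun _ => (1:ℝ)) x := by
        have e : P ^ j - 1 = ∑ i ∈ Finset.range j, (P ^ (i + 1) - P ^ i) *
            (SS N m n (i + 1)).indicator (fun _ => (1:ℝ)) x := by
          have := Finset.sum_range_sub (fun i => P ^ i) j
          simp only [pow_zero] at this
          rw [← this]
          refine Finset.sum_congr rfl fun i hi => ?_
          have : x ∈ SS N m n (i + 1) := SS_anti hN (by
            have := Finset.mem_range.1 hi; omega) hxj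
          simp [this]
        rw [e]
        exact Finset.sum_le_sum_of_subset_of_nonneg (Finset.range_mono hj) fun i _ _ =>
          mul_nonneg (hnn i) (indicator_nonneg (fun _ _ => zero_le_one) x)
      have := mul_le_mul_of_nonneg_left h1 hL.le
      unfold HH
      linarith
    · refine (Real.rpow_le_rpow hX h (by linarith)).trans ?_
      rw [hpw]
      have := mul_nonneg hL.le (hs0 (Finset.range k))
      unfold HH
      simp only [indicator_of_mem hxn]
      linarith
  have hmax : adicMax N (ph N m k n r y α l) x ≤ (HH N m k n P (l ^ p) x) ^ (1 / p) := by
    rw [max_eq hN _ hx]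
    refine ciSup_le fun M => ?_
    have hX := X_nonneg N (ph N m k n r y α l) M x
    rw [one_div, Real.le_rpow_inv_iff_of_pos hX hH0 (by linarith)]
    exact key M
  have hmax0 : 0 ≤ adicMax N (ph N m k n r y α l) x := by
    rw [max_eq hN _ hx]
    exact Real.iSup_nonneg fun M => X_nonneg _ _ _ _
  rw [one_div, Real.le_rpow_inv_iff_of_pos hmax0 hH0 (by linarith)] at hmax
  exact hmax

lemma int_HH (P L : ℝ) (E : Set ℝ) (hE : volume E ≠ ⊤) :
    IntegrableOn (HH N m k n P L) E ∧ ∫ x in E, HH N m k n P L x =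
      L * (volume.real E + ∑ j ∈ Finset.range k, (P ^ (j + 1) - P ^ j) *
        volume.real (SS N m n (j + 1) ∩ E)) + L * P ^ k * volume.real (adicItv N m n ∩ E) := by
  have i0 : IntegrableOn (fun _ => (1:ℝ)) E := integrableOn_const hE
  have i1 : ∀ j, IntegrableOn ((SS N m n j).indicator (fun _ => (1:ℝ))) E := fun j =>
    i0.integrable.indicator (meas_SS _ _ _ _)
  have i2 : IntegrableOn ((adicItv N m n).indicator (fun _ => (1:ℝ))) E :=
    i0.integrable.indicator (meas_itv _ _ _)
  have i3 : IntegrableOn (fun x => ∑ j ∈ Finset.range k, (P ^ (j + 1) - P ^ j) *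
    (SS N m n (j + 1)).indicator (fun _ => (1:ℝ)) x) E :=
      integrable_finsetSum _ fun j _ => (i1 (j + 1)).const_mul _
  have i4 := (i0.integrable.add i3).const_mul L
  have i5 := i2.integrable.const_mul (L * P ^ k)
  refine ⟨i4.add i5, ?_⟩
  unfold HH
  refine (integral_add i4 i5).trans ?_
  rw [integral_const_mul, integral_const_mul]
  have e := integral_add i0.integrable i3
  simp only [Pi.add_apply]
  rw [e, integral_finsetSum _ fun j _ => (i1 (j + 1)).const_mul _]
  simp only [integral_const_mul, integral_indicator_const _ (meas_SS _ _ _ _),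
    integral_indicator_const _ (meas_itv _ _ _),
    measureReal_restrict_apply (meas_SS _ _ _ _), measureReal_restrict_apply (meas_itv _ _ _)]
  simp

lemma sup_le (H : Hyp N m k n r y α l) (p κ : ℝ) (hp : 1 < p) (hκ : 0 < κ) :
    supMeas N p κ (ph N m k n r y α l) ≤
      l ^ p * (κ + ((N:ℝ) ^ p - 1) / ((N:ℝ) ^ p - N) * y * (((N:ℝ) ^ p / N) ^ k - 1))
        + l ^ p * ((N:ℝ) ^ p) ^ k / (N:ℝ) ^ m := by
  have hN := H.hN
  have hl := H.hl
  have hy := H.y0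
  have hNP := N_lt N hN p hp
  set P : ℝ := (N:ℝ) ^ p with hPdef
  have hN1 : (1:ℝ) < N := by exact_mod_cast (by omega : 1 < N)
  have hP1 : 1 ≤ P := by linarith
  have hL : 0 < l ^ p := Real.rpow_pos_of_pos hl p
  have hnn : ∀ j, 0 ≤ P ^ (j + 1) - P ^ j := fun j =>
    sub_nonneg.2 (pow_le_pow_right₀ hP1 (Nat.le_succ j))
  have hQ : 1 ≤ (P / N) ^ k := one_le_pow₀ (by rw [le_div_iff₀ (by linarith)]; linarith)
  have hA : 0 ≤ (P - 1) / (P - N) := div_nonneg (by linarith) (by linarith)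
  refine Real.sSup_le ?_ ?_
  · rintro z ⟨E, hEm, hEs, hEv, rfl⟩
    have hEf : volume E ≠ ⊤ := by rw [hEv]; exact ENNReal.ofReal_ne_top
    have hEr : volume.real E = κ := by rw [measureReal_def, hEv, ENNReal.toReal_ofReal hκ.le]
    obtain ⟨hi, he⟩ := int_HH (N := N) (m := m) (k := k) (n := n) P (l ^ p) E hEf
    have h1 : ∫ x in E, adicMax N (ph N m k n r y α l) x ^ p ≤
        ∫ x in E, HH N m k n P (l ^ p) x := by
      refine integral_mono_of_nonneg ?_ hi ?_
      · filter_upwards [ae_restrict_mem hEm] with x hx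
        refine Real.rpow_nonneg ?_ _
        rw [max_eq hN _ (hEs hx)]
        exact Real.iSup_nonneg fun M => X_nonneg _ _ _ _
      · filter_upwards [ae_restrict_mem hEm] with x hx
        exact H.max_rpow_le p hp (hEs hx)
    refine h1.trans ?_
    rw [he, hEr]
    have h2 : ∑ j ∈ Finset.range k, (P ^ (j + 1) - P ^ j) * volume.real (SS N m n (j + 1) ∩ E)
        ≤ (P - 1) / (P - N) * y * ((P / N) ^ k - 1) := by
      have : (P - 1) / (P - N) * y * ((P / N) ^ k - 1) =
          ∑ j ∈ Finset.range k, (P ^ (j + 1) - P ^ j) * (y / (N:ℝ) ^ (j + 1)) := by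
        have := geo k P N hN1 hNP
        calc _ = y * ((P - 1) / (P - N) * ((P / N) ^ k - 1)) := by ring
          _ = _ := by
            rw [← this, Finset.mul_sum]
            exact Finset.sum_congr rfl fun j _ => by ring
      rw [this]
      refine Finset.sum_le_sum fun j _ => mul_le_mul_of_nonneg_left ?_ (hnn j)
      refine (measureReal_mono inter_subset_left SS_fin).trans ?_
      rw [vol_SS hN, pow_add, ← div_div]
      have := H.hny
      gcongr
    have h3 : volume.real (adicItv N m n ∩ E) ≤ 1 / (N:ℝ) ^ m := by
      rw [← vol_itv (N := N) (m := m) (k := n)]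
      exact measureReal_mono inter_subset_left vol_itv_ne
    have h4 := mul_le_mul_of_nonneg_left h3 (by positivity : 0 ≤ l ^ p * P ^ k)
    have h5 := mul_le_mul_of_nonneg_left h2 hL.le
    rw [mul_one_div] at h4
    linarith
  · have : 0 ≤ (P / N) ^ k - 1 := by linarith
    positivity

end Hyp

end Adic

theorem stmt3 (N : ℕ) (hN : 2 ≤ N) (p f F κ c : ℝ) (hp : 1 < p)
    (hf : 0 < f) (hF : 0 < F) (hfF : f ^ p ≤ F)
    (hc : c = ((p - 1) / p) * (((N : ℝ) ^ p - 1) / ((N : ℝ) ^ p - N)))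
    (hκ1 : c * (f ^ p / F) ^ (1 / (p - 1)) ≤ κ) (hκ2 : κ ≤ c) :
    Dp N p F f κ =
      (((N : ℝ) ^ p - 1) / ((N : ℝ) ^ p - N)) *
        (F - c ^ (p - 1) * f ^ p / (p * κ ^ (p - 1))) := by
  have hNP := Adic.N_lt N hN p hp
  have hN1 : (1:ℝ) < N := by exact_mod_cast (by omega : 1 < N)
  have hc1 : c ≤ 1 := by rw [hc]; exact Adic.c_le_one N hN p hp
  obtain ⟨A, hA⟩ : ∃ A : ℝ, A = ((N : ℝ) ^ p - 1) / ((N : ℝ) ^ p - N) := ⟨_, rfl⟩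
  have hA0 : 0 < A := by rw [hA]; exact div_pos (by linarith) (by linarith)
  rw [← hA] at hc ⊢
  have hc0 : 0 < c := by
    rw [hc]; exact mul_pos (div_pos (by linarith) (by linarith)) hA0
  have hfp : 0 < f ^ p := Real.rpow_pos_of_pos hf p
  have hκ : 0 < κ := lt_of_lt_of_le
    (mul_pos hc0 (Real.rpow_pos_of_pos (div_pos hfp hF) _)) hκ1
  have hlow : ∀ φ : ℝ → ℝ, Measurable φ → (∀ x ∈ Set.Ico (0:ℝ) 1, 0 ≤ φ x) →
      (∫ x in Set.Ico (0:ℝ) 1, φ x) = f → (∫ x in Set.Ico (0:ℝ) 1, φ x ^ p) = F →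
      A * (F - c ^ (p - 1) * f ^ p / (p * κ ^ (p - 1))) ≤ supMeas N p κ φ := fun φ hm h0 h1 h2 =>
    Adic.low_final hN p A F f κ c hp hA hf hF hκ (hκ2.trans hc1) hc φ hm h0 h1 h2
  obtain ⟨l, hl⟩ : ∃ l : ℝ, l = c * f / κ := ⟨_, rfl⟩
  have hl0 : 0 < l := by rw [hl]; positivity
  have hopt := Adic.opt_eq p A F f κ c l hp hf hκ hA0 hc hl
  obtain ⟨α, hα⟩ : ∃ α : ℝ, α = κ / c := ⟨_, rfl⟩
  have hα0 : 0 < α := by rw [hα]; positivity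
  have hα1 : α ≤ 1 := by rw [hα]; exact (div_le_one hc0).2 hκ2
  have hlα : l * α = f := by rw [hl, hα]; field_simp
  have hL : 0 < l ^ p := Real.rpow_pos_of_pos hl0 p
  have hLs := Adic.pow_split hl0.le hp
  -- lower bound for F
  have hFL : l ^ p * α ≤ F := by
    have h1 : (f ^ p / F) ^ (1 / (p - 1)) ≤ α := by
      rw [hα, le_div_iff₀ hc0]; linarith
    have h2 : f ^ p / F ≤ α ^ (p - 1) := by
      rw [one_div, Real.rpow_inv_le_iff_of_pos (by positivity) hα0.le (by linarith)] at h1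
      exact h1
    rw [div_le_iff₀ hF, ← hlα, Real.mul_rpow hl0.le hα0.le, Adic.pow_split hα0.le hp] at h2
    have h3 : 0 < α ^ (p - 1) := Real.rpow_pos_of_pos hα0 _
    have h4 : α ^ (p - 1) * (l ^ p * α) ≤ α ^ (p - 1) * F := by linarith
    exact le_of_mul_le_mul_left h4 h3
  set P : ℝ := (N:ℝ) ^ p with hPdef
  have hQ : 1 < P / N := by rw [lt_div_iff₀ (by linarith)]; linarith
  obtain ⟨k, hk⟩ := pow_unbounded_of_one_lt (max (F / (l ^ p * α)) 1) hQ
  have hk1 : 1 < (P / N) ^ k := lt_of_le_of_lt (le_max_right _ _) hk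
  have hk2 : F ≤ l ^ p * α * (P / N) ^ k := by
    have := lt_of_le_of_lt (le_max_left _ _) hk
    rw [div_lt_iff₀ (by positivity)] at this
    linarith
  obtain ⟨y, hy⟩ : ∃ y : ℝ, y = (F / l ^ p - α) / ((P / N) ^ k - 1) := ⟨_, rfl⟩
  have hq : 0 < (P / N) ^ k - 1 := by linarith
  have hyq : y * ((P / N) ^ k - 1) = F / l ^ p - α := by rw [hy]; field_simp
  have hy0 : 0 ≤ y := by
    rw [hy]
    refine div_nonneg ?_ hq.le
    rw [sub_nonneg, le_div_iff₀ hL]; linarith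
  have hyα : y ≤ α := by
    rw [hy, div_le_iff₀ hq]
    have : F / l ^ p ≤ α * (P / N) ^ k := by rw [div_le_iff₀ hL]; linarith
    linarith
  have hFy : l ^ p * (α + y * ((P / N) ^ k - 1)) = F := by
    rw [hyq]; field_simp; ring
  have main : ∀ m : ℕ, ∃ φ : ℝ → ℝ, Measurable φ ∧ (∀ x ∈ Set.Ico (0:ℝ) 1, 0 ≤ φ x) ∧
      (∫ x in Set.Ico (0:ℝ) 1, φ x) = f ∧ (∫ x in Set.Ico (0:ℝ) 1, φ x ^ p) = F ∧
      supMeas N p κ φ ≤ A * (F - c ^ (p - 1) * f ^ p / (p * κ ^ (p - 1)))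
        + l ^ p * P ^ k / (N:ℝ) ^ m := by
    intro m
    have hm : (0:ℝ) < (N:ℝ) ^ m := by positivity
    have hkp : (0:ℝ) < (N:ℝ) ^ k := by positivity
    obtain ⟨n, hn⟩ : ∃ n : ℕ, n = ⌊y * (N:ℝ) ^ m⌋₊ := ⟨_, rfl⟩
    have H : Adic.Hyp N m k n ((y - (n:ℝ) / (N:ℝ) ^ m) / (N:ℝ) ^ k) y α l := by
      refine ⟨hN, ?_, ?_, by field_simp, hyα, hα1, hl0⟩
      · rw [div_le_iff₀ hm, hn]; exact Nat.floor_le (by positivity)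
      · rw [lt_div_iff₀ hm, hn]; exact Nat.lt_floor_add_one _
    refine ⟨_, Adic.Hyp.meas_ph _ _ _ _ _ _ _ _, fun x _ => H.ph_nonneg x, ?_, ?_, ?_⟩
    · rw [H.mean, hlα]
    · rw [H.pmean p hp, hFy]
    · refine (H.sup_le p κ hp hκ).trans (le_of_eq ?_)
      rw [hopt, ← hPdef, ← hA, mul_assoc A, hyq, hLs, ← hlα]
      have : 0 < l ^ (p - 1) := Real.rpow_pos_of_pos hl0 _
      field_simp
      ring
  apply le_antisymm
  · have hb : BddBelow {y : ℝ | ∃ φ : ℝ → ℝ, Measurable φ ∧ (∀ x ∈ Set.Ico (0:ℝ) 1, 0 ≤ φ x) ∧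
        (∫ x in Set.Ico (0:ℝ) 1, φ x) = f ∧ (∫ x in Set.Ico (0:ℝ) 1, φ x ^ p) = F ∧
        y = supMeas N p κ φ} := by
      refine ⟨A * (F - c ^ (p - 1) * f ^ p / (p * κ ^ (p - 1))), ?_⟩
      rintro z ⟨φ, hm, h0, h1, h2, rfl⟩
      exact hlow φ hm h0 h1 h2
    have hm : ∀ m : ℕ, Dp N p F f κ ≤ A * (F - c ^ (p - 1) * f ^ p / (p * κ ^ (p - 1)))
        + l ^ p * P ^ k / (N:ℝ) ^ m := by
      intro m
      obtain ⟨φ, hm, h0, h1, h2, h3⟩ := main m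
      exact (csInf_le hb ⟨φ, hm, h0, h1, h2, rfl⟩).trans h3
    refine ge_of_tendsto' (x := atTop) ?_ hm
    have ht : Tendsto (fun m : ℕ => l ^ p * P ^ k / (N:ℝ) ^ m) atTop (nhds 0) :=
      (tendsto_pow_atTop_atTop_of_one_lt hN1).const_div_atTop _
    simpa using ht.const_add (A * (F - c ^ (p - 1) * f ^ p / (p * κ ^ (p - 1))))
  · refine le_csInf ?_ ?_
    · obtain ⟨φ, hm, h0, h1, h2, _⟩ := main 0
      exact ⟨_, φ, hm, h0, h1, h2, rfl⟩
    · rintro z ⟨φ, hm, h0, h1, h2, rfl⟩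
      exact hlow φ hm h0 h1 h2
end

section
/- For every integer N ≥ 2, every real p > 1, all positive reals f, F with f^p ≤ F, and every κ with 0 < κ ≤ c(N,p)·(f^p/F)^{1/(p−1)}, one has D_p(F,f,κ) = κ·(F/f)^{p/(p−1)}, where D_p(F,f,κ) := inf { sup_{E measurable, μ(E)=κ} ∫_E (M_N φ)^p dμ : φ ≥ 0 measurable on [0,1), ∫ φ dμ = f, ∫ φ^p dμ = F }. -/
open MeasureTheory Set Filter

section helpers

lemma pt_A {N : ℝ} (hN : 2 ≤ N) {p : ℝ} (hp : 1 < p) {X s : ℝ} (hX : 0 < X) (h1 : X ≤ s)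
    (h2 : s ≤ N * X) :
    X ^ p - ((N ^ p - 1) / (N ^ p - N)) * X ^ (p - 1) * s ≤
      s ^ p - ((N ^ p - 1) / (N ^ p - N)) * s ^ (p - 1) * s := by
  have hNp : N < N ^ p := by
    conv_lhs => rw [← Real.rpow_one N]
    exact Real.rpow_lt_rpow_of_exponent_lt (by linarith) hp
  obtain ⟨t, rfl⟩ : ∃ t, s = t * X := ⟨s / X, by field_simp⟩
  have ht1 : 1 ≤ t := by
    by_contra h; push Not at h; nlinarith
  have ht2 : t ≤ N := by
    by_contra h; push Not at h; nlinarith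
  have hs : 0 < t * X := by positivity
  have e1 : (t * X) ^ (p - 1) * (t * X) = (t * X) ^ p := by
    rw [← Real.rpow_add_one hs.ne']; simp
  have e2 : X ^ (p - 1) * X = X ^ p := by
    rw [← Real.rpow_add_one hX.ne']; simp
  have e3 : (t * X) ^ p = t ^ p * X ^ p := Real.mul_rpow (by positivity) hX.le
  have hconv : t ^ p ≤ 1 + (t - 1) * ((N ^ p - 1) / (N - 1)) := by
    have hc := (convexOn_rpow hp.le).2 (show (1:ℝ) ∈ Ici 0 by simp)
      (show N ∈ Ici 0 by simp; linarith)
      (show 0 ≤ (N - t) / (N - 1) from div_nonneg (by linarith) (by linarith))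
      (show 0 ≤ (t - 1) / (N - 1) from div_nonneg (by linarith) (by linarith))
      (by rw [← add_div, div_eq_one_iff_eq (by linarith)]; ring)
    have : ((N - t) / (N - 1)) • (1:ℝ) + ((t - 1) / (N - 1)) • N = t := by
      simp only [smul_eq_mul]
      have : N - 1 ≠ 0 := by linarith
      field_simp; ring
    rw [this] at hc
    refine hc.trans (le_of_eq ?_)
    simp only [smul_eq_mul, Real.one_rpow]
    have : N - 1 ≠ 0 := by linarith
    field_simp; ring
  have hd : 0 < N ^ p - N := by linarith
  have hmul : t ^ p * ((N - 1) / (N ^ p - N)) ≤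
      (1 + (t - 1) * ((N ^ p - 1) / (N - 1))) * ((N - 1) / (N ^ p - N)) :=
    mul_le_mul_of_nonneg_right hconv (div_nonneg (by linarith) hd.le)
  have hmain : 1 - (N ^ p - 1) / (N ^ p - N) * t ≤ t ^ p - (N ^ p - 1) / (N ^ p - N) * t ^ p := by
    have a1 : (N ^ p - 1) / (N ^ p - N) = 1 + (N - 1) / (N ^ p - N) := by
      field_simp; ring
    have a2 : (1 + (t - 1) * ((N ^ p - 1) / (N - 1))) * ((N - 1) / (N ^ p - N)) =
        (N - 1) / (N ^ p - N) + (t - 1) * ((N ^ p - 1) / (N ^ p - N)) := by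
      have : N - 1 ≠ 0 := by linarith
      field_simp
    rw [a2] at hmul
    rw [a1] at hmul ⊢
    nlinarith
  have := mul_le_mul_of_nonneg_right hmain (Real.rpow_nonneg hX.le p)
  calc _ = (1 - (N ^ p - 1) / (N ^ p - N) * t) * X ^ p := by rw [← e2]; ring
    _ ≤ _ := this
    _ = (t * X) ^ p - (N ^ p - 1) / (N ^ p - N) * (t * X) ^ p := by rw [e3]; ring
    _ = _ := by rw [mul_assoc, e1]

lemma pt_B {p : ℝ} (hp : 1 < p) {X s : ℝ} (hX : 0 < X) (h1 : X ≤ s) :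
    s ^ p - (p / (p - 1)) * s ^ (p - 1) * s ≤ X ^ p - (p / (p - 1)) * X ^ (p - 1) * s := by
  obtain ⟨t, rfl⟩ : ∃ t, s = (1 + t) * X := ⟨s / X - 1, by field_simp; ring⟩
  have ht1 : 0 ≤ t := by
    by_contra h; push Not at h; nlinarith
  have hs : 0 < (1 + t) * X := by positivity
  have e1 : ((1 + t) * X) ^ (p - 1) * ((1 + t) * X) = ((1 + t) * X) ^ p := by
    rw [← Real.rpow_add_one hs.ne']; simp
  have e2 : X ^ (p - 1) * X = X ^ p := by
    rw [← Real.rpow_add_one hX.ne']; simp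
  have e3 : ((1 + t) * X) ^ p = (1 + t) ^ p * X ^ p := Real.mul_rpow (by positivity) hX.le
  have hb := one_add_mul_self_le_rpow_one_add (s := t) (by linarith) hp.le
  have hq : 0 < p - 1 := by linarith
  have hmain : (1 + t) ^ p - p / (p - 1) * (1 + t) ^ p ≤ 1 - p / (p - 1) * (1 + t) := by
    have a1 : p / (p - 1) = 1 + 1 / (p - 1) := by field_simp; ring
    have := mul_le_mul_of_nonneg_right hb (by positivity : 0 ≤ 1 / (p - 1))
    have a2 : (1 + p * t) * (1 / (p - 1)) = 1 / (p - 1) + t * (1 + 1 / (p - 1)) := by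
      field_simp; ring
    rw [a1]; rw [a2] at this; nlinarith
  have := mul_le_mul_of_nonneg_right hmain (Real.rpow_nonneg hX.le p)
  calc _ = ((1 + t) * X) ^ p - p / (p - 1) * ((1 + t) * X) ^ p := by rw [mul_assoc, e1]
    _ = ((1 + t) ^ p - p / (p - 1) * (1 + t) ^ p) * X ^ p := by rw [e3]; ring
    _ ≤ _ := this
    _ = _ := by rw [← e2]; ring

/-- level functions -/
def Lev (N m : ℕ) (g : ℝ → ℝ) : Prop := ∃ G : ℕ → ℝ, ∀ x, g x = G ⌊x * (N : ℝ) ^ m⌋₊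

noncomputable def EE (N : ℕ) (ψ : ℝ → ℝ) (m : ℕ) (x : ℝ) : ℝ :=
  (N : ℝ) ^ m * ∫ y in adicItv N m ⌊x * (N : ℝ) ^ m⌋₊, ψ y

noncomputable def XX (N : ℕ) (ψ : ℝ → ℝ) (L : ℝ) (m : ℕ) (x : ℝ) : ℝ :=
  max L (partialSups (fun j => EE N ψ j x) m)

lemma Lev.meas {N m : ℕ} {g : ℝ → ℝ} (h : Lev N m g) : Measurable g := by
  obtain ⟨G, hG⟩ := h
  have : g = G ∘ (fun x => ⌊x * (N : ℝ) ^ m⌋₊) := funext hG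
  rw [this]
  exact (measurable_from_nat).comp (Nat.measurable_floor.comp (by fun_prop))

lemma Lev.succ {N m : ℕ} (hN : 2 ≤ N) {g : ℝ → ℝ} (h : Lev N m g) : Lev N (m + 1) g := by
  obtain ⟨G, hG⟩ := h
  refine ⟨fun k => G (k / N), fun x => ?_⟩
  simp only [hG]
  rw [← Nat.floor_div_natCast]
  congr 2
  have : (N : ℝ) ≠ 0 := by positivity
  field_simp
  ring

lemma Lev.max {N m : ℕ} {g h : ℝ → ℝ} (hg : Lev N m g) (hh : Lev N m h) :
    Lev N m (fun x => max (g x) (h x)) := by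
  obtain ⟨G, hG⟩ := hg
  obtain ⟨H, hH⟩ := hh
  exact ⟨fun k => Max.max (G k) (H k), fun x => by simp only [hG, hH]⟩

lemma Lev.comp {N m : ℕ} {g : ℝ → ℝ} (u : ℝ → ℝ) (hg : Lev N m g) :
    Lev N m (fun x => u (g x)) := by
  obtain ⟨G, hG⟩ := hg
  exact ⟨fun k => u (G k), fun x => by simp only [hG]⟩

lemma Lev.EE (N : ℕ) (ψ : ℝ → ℝ) (m : ℕ) : Lev N m (EE N ψ m) :=
  ⟨fun k => (N : ℝ) ^ m * ∫ y in adicItv N m k, ψ y, fun _ => rfl⟩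

lemma XX_succ (N : ℕ) (ψ : ℝ → ℝ) (L : ℝ) (m : ℕ) (x : ℝ) :
    XX N ψ L (m + 1) x = max (XX N ψ L m x) (EE N ψ (m + 1) x) := by
  unfold XX
  rw [partialSups_add_one, max_assoc]

lemma Lev.XX {N : ℕ} (hN : 2 ≤ N) (ψ : ℝ → ℝ) (L : ℝ) (m : ℕ) : Lev N m (XX N ψ L m) := by
  induction m with
  | zero =>
    refine (Lev.max (g := fun _ => L) ⟨fun _ => L, fun _ => rfl⟩ (Lev.EE N ψ 0))
  | succ m ih =>
    have := Lev.max (ih.succ hN) (Lev.EE N ψ (m + 1))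
    simpa only [← XX_succ] using this

lemma mem_adic {N : ℕ} (hN : 2 ≤ N) {m k : ℕ} {x : ℝ} (hx : 0 ≤ x) :
    x ∈ adicItv N m k ↔ ⌊x * (N : ℝ) ^ m⌋₊ = k := by
  have : (0:ℝ) < (N : ℝ) ^ m := by positivity
  rw [Nat.floor_eq_iff (by positivity), adicItv, mem_Ico, div_le_iff₀ this, lt_div_iff₀ this]

lemma adic_nonneg {N : ℕ} {m k : ℕ} {x : ℝ} (hx : x ∈ adicItv N m k) : 0 ≤ x :=
  le_trans (by positivity) hx.1

lemma floor_lt {N : ℕ} (hN : 2 ≤ N) {m : ℕ} {x : ℝ} (hx : x ∈ Ico (0:ℝ) 1) :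
    ⌊x * (N : ℝ) ^ m⌋₊ < N ^ m := by
  have : (0:ℝ) < (N : ℝ) ^ m := by positivity
  have h0 := hx.1
  rw [Nat.floor_lt (by positivity)]
  push_cast
  nlinarith [hx.2]

lemma adic_sub {N : ℕ} (hN : 2 ≤ N) {m k : ℕ} (hk : k < N ^ m) : adicItv N m k ⊆ Ico (0:ℝ) 1 := by
  intro x hx
  refine ⟨adic_nonneg hx, hx.2.trans_le ?_⟩
  have : (0:ℝ) < (N : ℝ) ^ m := by positivity
  rw [div_le_one this]
  exact_mod_cast hk

lemma adic_union {N : ℕ} (hN : 2 ≤ N) (m : ℕ) :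
    (⋃ k ∈ Finset.range (N ^ m), adicItv N m k) = Ico (0:ℝ) 1 := by
  ext x
  simp only [mem_iUnion, Finset.mem_range, exists_prop]
  constructor
  · rintro ⟨k, hk, hx⟩
    exact adic_sub hN hk hx
  · intro hx
    exact ⟨_, floor_lt hN hx, (mem_adic hN hx.1).2 rfl⟩

lemma adic_disj {N : ℕ} (hN : 2 ≤ N) (m : ℕ) (s : Set ℕ) :
    s.Pairwise (Function.onFun Disjoint (adicItv N m)) := by
  intro a _ b _ hab
  refine Set.disjoint_left.2 fun x h1 h2 => hab ?_
  rw [mem_adic hN (adic_nonneg h1)] at h1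
  rw [mem_adic hN (adic_nonneg h2)] at h2
  exact h1.symm.trans h2

lemma adic_meas (N m k : ℕ) : MeasurableSet (adicItv N m k) := measurableSet_Ico

lemma adic_vol {N : ℕ} (hN : 2 ≤ N) (m k : ℕ) : volume.real (adicItv N m k) = ((N : ℝ) ^ m)⁻¹ := by
  have : (0:ℝ) < (N : ℝ) ^ m := by positivity
  rw [adicItv, Real.volume_real_Ico_of_le]
  · field_simp; ring
  · gcongr; linarith

lemma step_int {N : ℕ} (hN : 2 ≤ N) {m : ℕ} {g h : ℝ → ℝ} (G : ℕ → ℝ)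
    (hG : ∀ x, g x = G ⌊x * (N : ℝ) ^ m⌋₊) (hh : IntegrableOn h (Ico (0:ℝ) 1)) :
    IntegrableOn (fun x => g x * h x) (Ico (0:ℝ) 1) ∧
    ∫ x in Ico (0:ℝ) 1, g x * h x =
      ∑ k ∈ Finset.range (N ^ m), G k * ∫ x in adicItv N m k, h x := by
  have hc : ∀ k, EqOn (fun x => g x * h x) (fun x => G k * h x) (adicItv N m k) := by
    intro k x hx
    have := (mem_adic hN (adic_nonneg hx)).1 hx
    simp only [hG, this]
  have hI : ∀ k ∈ Finset.range (N ^ m), IntegrableOn (fun x => g x * h x) (adicItv N m k) := by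
    intro k hk
    rw [integrableOn_congr_fun (hc k) (adic_meas _ _ _)]
    exact (hh.mono_set (adic_sub hN (Finset.mem_range.1 hk))).const_mul _
  rw [← adic_union hN m]
  refine ⟨integrableOn_finset_iUnion.2 hI, ?_⟩
  rw [integral_biUnion_finset _ (fun k _ => adic_meas _ _ _) (adic_disj hN m _) hI]
  refine Finset.sum_congr rfl fun k _ => ?_
  rw [setIntegral_congr_fun (adic_meas _ _ _) (hc k), integral_const_mul]

lemma Lev.intble {N : ℕ} (hN : 2 ≤ N) {m : ℕ} {g h : ℝ → ℝ} (hg : Lev N m g)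
    (hh : IntegrableOn h (Ico (0:ℝ) 1)) : IntegrableOn (fun x => g x * h x) (Ico (0:ℝ) 1) := by
  obtain ⟨G, hG⟩ := hg
  exact (step_int hN G hG hh).1

lemma Lev.intble1 {N : ℕ} (hN : 2 ≤ N) {m : ℕ} {g : ℝ → ℝ} (hg : Lev N m g) :
    IntegrableOn g (Ico (0:ℝ) 1) := by
  have := hg.intble hN (h := fun _ => 1) (by simp)
  simpa using this

lemma Lev.mart {N : ℕ} (hN : 2 ≤ N) {m : ℕ} {g ψ : ℝ → ℝ} (hg : Lev N m g)
    (hh : IntegrableOn ψ (Ico (0:ℝ) 1)) :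
    ∫ x in Ico (0:ℝ) 1, g x * _root_.EE N ψ m x = ∫ x in Ico (0:ℝ) 1, g x * ψ x := by
  obtain ⟨G, hG⟩ := hg
  rw [(step_int hN G hG hh).2, (step_int hN G hG ((Lev.EE N ψ m).intble1 hN)).2]
  refine Finset.sum_congr rfl fun k _ => ?_
  congr 1
  have : EqOn (_root_.EE N ψ m) (fun _ => (N : ℝ) ^ m * ∫ y in adicItv N m k, ψ y)
    (adicItv N m k) := by
    intro x hx
    have := (mem_adic hN (adic_nonneg hx)).1 hx
    simp only [_root_.EE, this]
  rw [setIntegral_congr_fun (adic_meas _ _ _) this, setIntegral_const, adic_vol hN, smul_eq_mul]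
  have : (0:ℝ) < (N : ℝ) ^ m := by positivity
  field_simp

lemma EE_zero {N : ℕ} {ψ : ℝ → ℝ} {x : ℝ} (hx : x ∈ Ico (0:ℝ) 1) :
    EE N ψ 0 x = ∫ y in Ico (0:ℝ) 1, ψ y := by
  have : ⌊x⌋₊ = 0 := by rw [Nat.floor_eq_zero]; exact hx.2
  simp [EE, adicItv, this]

lemma EE_succ_le {N : ℕ} (hN : 2 ≤ N) {ψ : ℝ → ℝ} (h0 : ∀ x, 0 ≤ ψ x)
    (hh : IntegrableOn ψ (Ico (0:ℝ) 1)) (m : ℕ) {x : ℝ} (hx : x ∈ Ico (0:ℝ) 1) :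
    EE N ψ (m + 1) x ≤ N * EE N ψ m x := by
  unfold EE
  have : (∫ y in adicItv N (m + 1) ⌊x * (N : ℝ) ^ (m + 1)⌋₊, ψ y) ≤
      ∫ y in adicItv N m ⌊x * (N : ℝ) ^ m⌋₊, ψ y := by
    refine setIntegral_mono_set (hh.mono_set (adic_sub hN (floor_lt hN hx)))
      (Eventually.of_forall h0) (LE.le.eventuallyLE ?_)
    intro y hy
    have hy0 := adic_nonneg hy
    rw [mem_adic hN hy0] at hy ⊢
    have key : ∀ z : ℝ, ⌊z * (N : ℝ) ^ m⌋₊ = ⌊z * (N : ℝ) ^ (m + 1)⌋₊ / N := by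
      intro z
      rw [← Nat.floor_div_natCast]
      congr 1
      have : (N : ℝ) ≠ 0 := by positivity
      field_simp
      ring
    rw [key, key, hy]
  have h2 := mul_le_mul_of_nonneg_left this (by positivity : (0:ℝ) ≤ (N : ℝ) ^ (m + 1))
  calc _ ≤ _ := h2
    _ = _ := by ring

lemma EE_le_XX (N : ℕ) (ψ : ℝ → ℝ) (L : ℝ) (m : ℕ) (x : ℝ) : EE N ψ m x ≤ XX N ψ L m x :=
  le_max_of_le_right (le_partialSups (fun j => EE N ψ j x) m)

lemma potential {N : ℕ} (hN : 2 ≤ N) {p : ℝ} {ψ : ℝ → ℝ} (h0 : ∀ x, 0 ≤ ψ x)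
    (hh : IntegrableOn ψ (Ico (0:ℝ) 1)) {L : ℝ} (hL0 : 0 < L)
    (hL : ∫ x in Ico (0:ℝ) 1, ψ x ≤ L) (a ε : ℝ)
    (hpt : ∀ X s : ℝ, 0 < X → X ≤ s → s ≤ N * X →
      ε * (X ^ p - a * X ^ (p - 1) * s) ≤ ε * (s ^ p - a * s ^ (p - 1) * s)) (m : ℕ) :
    ε * (L ^ p - a * L ^ (p - 1) * ∫ x in Ico (0:ℝ) 1, ψ x) ≤
      ε * ((∫ x in Ico (0:ℝ) 1, XX N ψ L m x ^ p) -
        a * ∫ x in Ico (0:ℝ) 1, XX N ψ L m x ^ (p - 1) * ψ x) := by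
  induction m with
  | zero =>
    have e : ∀ x ∈ Ico (0:ℝ) 1, XX N ψ L 0 x = L := by
      intro x hx
      simp only [XX, partialSups_zero]
      rw [EE_zero hx]; exact max_eq_left hL
    have e1 : ∫ x in Ico (0:ℝ) 1, XX N ψ L 0 x ^ p = L ^ p := by
      rw [setIntegral_congr_fun (g := fun _ => L ^ p) measurableSet_Ico
        (fun x hx => by simp only [e x hx])]
      simp
    have e2 : ∫ x in Ico (0:ℝ) 1, XX N ψ L 0 x ^ (p - 1) * ψ x
        = L ^ (p - 1) * ∫ x in Ico (0:ℝ) 1, ψ x := by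
      rw [setIntegral_congr_fun (g := fun x => L ^ (p - 1) * ψ x) measurableSet_Ico
        (fun x hx => by simp only [e x hx]), integral_const_mul]
    rw [e1, e2, mul_assoc]
  | succ m ih =>
    refine ih.trans ?_
    have l1 := (Lev.XX hN ψ L m).comp (fun t => t ^ p)
    have l2 := (Lev.XX hN ψ L m).comp (fun t => t ^ (p - 1))
    have l3 := (Lev.XX hN ψ L (m + 1)).comp (fun t => t ^ p)
    have l4 := (Lev.XX hN ψ L (m + 1)).comp (fun t => t ^ (p - 1))
    have lE := (Lev.EE N ψ (m + 1)).intble1 hN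
    rw [← (l2.succ hN).mart hN hh, ← l4.mart hN hh, ← integral_const_mul, ← integral_const_mul,
      ← integral_sub (l1.intble1 hN) (((l2.succ hN).intble hN lE).const_mul a),
      ← integral_sub (l3.intble1 hN) ((l4.intble hN lE).const_mul a),
      ← integral_const_mul, ← integral_const_mul]
    refine setIntegral_mono_on
      (((l1.intble1 hN).sub (((l2.succ hN).intble hN lE).const_mul a)).const_mul ε)
      (((l3.intble1 hN).sub ((l4.intble hN lE).const_mul a)).const_mul ε) measurableSet_Ico ?_
    intro x hx
    rw [XX_succ]
    have hXpos : 0 < XX N ψ L m x := lt_max_of_lt_left hL0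
    rcases le_total (EE N ψ (m + 1) x) (XX N ψ L m x) with hle | hle
    · rw [max_eq_left hle]
    · rw [max_eq_right hle]
      have := hpt _ _ hXpos hle ((EE_succ_le hN h0 hh m hx).trans
        (mul_le_mul_of_nonneg_left (EE_le_XX N ψ L m x) (by positivity)))
      simpa only [mul_assoc] using this

lemma XX_pos {N : ℕ} {ψ : ℝ → ℝ} {L : ℝ} (hL : 0 < L) (m : ℕ) (x : ℝ) : 0 < XX N ψ L m x :=
  lt_max_of_lt_left hL

lemma young {p : ℝ} (hp : 1 < p) {X y : ℝ} (hX : 0 < X) (hy : 0 ≤ y) :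
    (p / (p - 1)) * (X ^ (p - 1) * y) ≤
      X ^ p / 2 + (p / (p - 1)) * (2 * (p / (p - 1))) ^ (p - 1) * y ^ p := by
  have hq : 0 < p / (p - 1) := div_pos (by linarith) (by linarith)
  set q := p / (p - 1) with hqd
  have e2 : X ^ (p - 1) * X = X ^ p := by
    rw [← Real.rpow_add_one hX.ne']; simp
  rcases le_total (2 * q * y) X with h | h
  · have : X ^ (p - 1) * (2 * q * y) ≤ X ^ (p - 1) * X :=
      mul_le_mul_of_nonneg_left h (by positivity)
    have h3 : 0 ≤ q * (2 * q) ^ (p - 1) * y ^ p := by positivity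
    rw [e2] at this
    linarith
  · have hy0 : 0 < y := by
      by_contra hn
      have : y = 0 := by linarith
      subst this; simp at h; linarith
    have e3 : y ^ (p - 1) * y = y ^ p := by
      rw [← Real.rpow_add_one hy0.ne']; simp
    have : X ^ (p - 1) ≤ (2 * q * y) ^ (p - 1) :=
      Real.rpow_le_rpow hX.le h (by linarith)
    rw [Real.mul_rpow (by positivity) hy] at this
    have h4 := mul_le_mul_of_nonneg_left (mul_le_mul_of_nonneg_right this hy) hq.le
    have h3 : 0 ≤ X ^ p := by positivity
    have h5 : q * ((2 * q) ^ (p - 1) * y ^ (p - 1) * y) = q * (2 * q) ^ (p - 1) * y ^ p := by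
      rw [← e3]; ring
    rw [h5] at h4
    linarith

lemma doob {N : ℕ} (hN : 2 ≤ N) {p : ℝ} (hp : 1 < p) {ψ : ℝ → ℝ} (h0 : ∀ x, 0 ≤ ψ x)
    (hh : IntegrableOn ψ (Ico (0:ℝ) 1)) (hhp : IntegrableOn (fun x => ψ x ^ p) (Ico (0:ℝ) 1))
    {L : ℝ} (hL0 : 0 < L) (hL : ∫ x in Ico (0:ℝ) 1, ψ x ≤ L) :
    ∃ C : ℝ, ∀ m, ∫ x in Ico (0:ℝ) 1, XX N ψ L m x ^ p ≤ C := by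
  have hq : 0 < p / (p - 1) := div_pos (by linarith) (by linarith)
  refine ⟨2 * (L ^ p + (p / (p - 1)) * (2 * (p / (p - 1))) ^ (p - 1) *
    ∫ x in Ico (0:ℝ) 1, ψ x ^ p), fun m => ?_⟩
  have h1 := potential (p := p) hN h0 hh hL0 hL (p / (p - 1)) (-1)
    (fun X s hX h1 h2 => by linarith [pt_B hp hX h1]) m
  have l1 := ((Lev.XX hN ψ L m).comp (fun t => t ^ p)).intble1 hN
  have l2 := ((Lev.XX hN ψ L m).comp (fun t => t ^ (p - 1))).intble hN hh
  have h2 : ∫ x in Ico (0:ℝ) 1, (p / (p - 1)) * (XX N ψ L m x ^ (p - 1) * ψ x) ≤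
      ∫ x in Ico (0:ℝ) 1, (XX N ψ L m x ^ p / 2 +
        (p / (p - 1)) * (2 * (p / (p - 1))) ^ (p - 1) * ψ x ^ p) :=
    setIntegral_mono_on (l2.const_mul _) ((l1.div_const 2).add (hhp.const_mul _)) measurableSet_Ico
      (fun x _ => young hp (XX_pos hL0 m x) (h0 x))
  rw [integral_const_mul, integral_add (l1.div_const 2) (hhp.const_mul _), integral_div,
    integral_const_mul] at h2
  have h3 : 0 ≤ (p / (p - 1)) * L ^ (p - 1) * ∫ x in Ico (0:ℝ) 1, ψ x :=
    mul_nonneg (by positivity) (setIntegral_nonneg measurableSet_Ico fun x _ => h0 x)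
  linarith

lemma XX_mono (N : ℕ) (ψ : ℝ → ℝ) (L : ℝ) (x : ℝ) : Monotone (fun m => XX N ψ L m x) :=
  fun _ _ h => max_le_max le_rfl ((partialSups (fun j => EE N ψ j x)).mono h)

lemma bdd_ae {N : ℕ} (hN : 2 ≤ N) {p : ℝ} (hp : 1 < p) {ψ : ℝ → ℝ} (h0 : ∀ x, 0 ≤ ψ x)
    (hh : IntegrableOn ψ (Ico (0:ℝ) 1)) (hhp : IntegrableOn (fun x => ψ x ^ p) (Ico (0:ℝ) 1))
    {L : ℝ} (hL0 : 0 < L) (hL : ∫ x in Ico (0:ℝ) 1, ψ x ≤ L) :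
    ∀ᵐ x ∂(volume.restrict (Ico (0:ℝ) 1)), BddAbove (range fun m => EE N ψ m x) := by
  obtain ⟨C, hC⟩ := doob hN hp h0 hh hhp hL0 hL
  have hm : ∀ m, Measurable (fun x => ENNReal.ofReal (XX N ψ L m x ^ p)) := fun m =>
    ((Lev.XX hN ψ L m).comp (fun t => t ^ p)).meas.ennreal_ofReal
  have hmono : Monotone (fun m x => ENNReal.ofReal (XX N ψ L m x ^ p)) := by
    intro a b hab x
    exact ENNReal.ofReal_le_ofReal
      (Real.rpow_le_rpow (XX_pos hL0 _ _).le (XX_mono N ψ L x hab) (by linarith))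
  have h1 := lintegral_iSup (μ := volume.restrict (Ico (0:ℝ) 1)) hm hmono
  have h2 : ∫⁻ x in Ico (0:ℝ) 1, ⨆ m, ENNReal.ofReal (XX N ψ L m x ^ p) ≠ ⊤ := by
    rw [h1]
    refine ne_top_of_le_ne_top (b := ENNReal.ofReal C) ENNReal.ofReal_ne_top (iSup_le fun m => ?_)
    rw [← ofReal_integral_eq_lintegral_ofReal
      (((Lev.XX hN ψ L m).comp (fun t => t ^ p)).intble1 hN)
      (Eventually.of_forall fun x => Real.rpow_nonneg (XX_pos hL0 m x).le p)]
    exact ENNReal.ofReal_le_ofReal (hC m)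
  filter_upwards [ae_lt_top (Measurable.iSup hm) h2] with x hx
  refine ⟨max 1 (⨆ m, ENNReal.ofReal (XX N ψ L m x ^ p)).toReal, ?_⟩
  rintro _ ⟨m, rfl⟩
  refine (EE_le_XX N ψ L m x).trans ?_
  rcases le_total (XX N ψ L m x) 1 with h | h
  · exact le_max_of_le_left h
  · refine le_max_of_le_right ?_
    have h3 : XX N ψ L m x ≤ XX N ψ L m x ^ p := by
      conv_lhs => rw [← Real.rpow_one (XX N ψ L m x)]
      exact Real.rpow_le_rpow_of_exponent_le h hp.le
    refine h3.trans ?_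
    rw [← ENNReal.ofReal_le_iff_le_toReal hx.ne]
    exact le_iSup (fun m => ENNReal.ofReal (XX N ψ L m x ^ p)) m

noncomputable def MM (N : ℕ) (ψ : ℝ → ℝ) (x : ℝ) : ℝ := ⨆ m, EE N ψ m x

lemma MM_meas (N : ℕ) (ψ : ℝ → ℝ) : Measurable (MM N ψ) :=
  Measurable.iSup fun m => (Lev.EE N ψ m).meas

lemma XX_tendsto {N : ℕ} {ψ : ℝ → ℝ} {L x : ℝ} (h : BddAbove (range fun m => EE N ψ m x)) :
    Tendsto (fun m => XX N ψ L m x) atTop (nhds (max L (MM N ψ x))) := by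
  refine tendsto_const_nhds.max ?_
  have := tendsto_atTop_ciSup (partialSups (fun j => EE N ψ j x)).mono
    (bddAbove_range_partialSups.2 h)
  rwa [ciSup_partialSups_eq h] at this

lemma maxM_int {N : ℕ} (hN : 2 ≤ N) {p : ℝ} (hp : 1 < p) {ψ : ℝ → ℝ} (h0 : ∀ x, 0 ≤ ψ x)
    (hh : IntegrableOn ψ (Ico (0:ℝ) 1)) (hhp : IntegrableOn (fun x => ψ x ^ p) (Ico (0:ℝ) 1))
    {L : ℝ} (hL0 : 0 < L) (hL : ∫ x in Ico (0:ℝ) 1, ψ x ≤ L) :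
    IntegrableOn (fun x => max L (MM N ψ x) ^ p) (Ico (0:ℝ) 1) := by
  obtain ⟨C, hC⟩ := doob hN hp h0 hh hhp hL0 hL
  refine integrable_of_tendsto (G := fun m x => XX N ψ L m x ^ p) ?_
    (fun m => ((Lev.XX hN ψ L m).comp (fun t => t ^ p)).meas.aestronglyMeasurable) ?_
  · filter_upwards [bdd_ae hN hp h0 hh hhp hL0 hL] with x hx
    exact (XX_tendsto hx).rpow_const (Or.inr (by linarith))
  · refine ne_top_of_le_ne_top (b := ENNReal.ofReal C) ENNReal.ofReal_ne_top ?_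
    refine liminf_le_of_le (by isBoundedDefault) fun b hb => ?_
    obtain ⟨m, hm⟩ := hb.exists
    refine hm.trans ?_
    rw [← ofReal_integral_norm_eq_lintegral_enorm
      (((Lev.XX hN ψ L m).comp (fun t => t ^ p)).intble1 hN)]
    refine ENNReal.ofReal_le_ofReal (le_trans (le_of_eq ?_) (hC m))
    congr 1; ext x
    exact Real.norm_of_nonneg (Real.rpow_nonneg (XX_pos hL0 m x).le p)

lemma leb {N : ℕ} (hN : 2 ≤ N) {ψ : ℝ → ℝ} (hh : Integrable ψ) :
    ∀ᵐ x ∂(volume.restrict (Ico (0:ℝ) 1)),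
      Tendsto (fun m => EE N ψ m x) atTop (nhds (ψ x)) := by
  rw [ae_restrict_iff' measurableSet_Ico]
  filter_upwards [IsUnifLocDoublingMeasure.ae_tendsto_average (μ := volume)
    hh.locallyIntegrable 1] with x hx hx01
  have hN1 : (1:ℝ) < N := by exact_mod_cast (by omega : 1 < N)
  have hpos : ∀ m : ℕ, (0:ℝ) < (N : ℝ) ^ m := fun m => by positivity
  have := hx (l := atTop) (fun m : ℕ => ((⌊x * (N : ℝ) ^ m⌋₊ : ℝ) + 1 / 2) / (N : ℝ) ^ m)
    (fun m : ℕ => (1 / 2) / (N : ℝ) ^ m) ?_ ?_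
  · refine this.congr fun m => ?_
    have e : Metric.closedBall (((⌊x * (N : ℝ) ^ m⌋₊ : ℝ) + 1 / 2) / (N : ℝ) ^ m)
        ((1 / 2) / (N : ℝ) ^ m) = Icc ((⌊x * (N : ℝ) ^ m⌋₊ : ℝ) / (N : ℝ) ^ m)
          (((⌊x * (N : ℝ) ^ m⌋₊ : ℝ) + 1) / (N : ℝ) ^ m) := by
      rw [Real.closedBall_eq_Icc]; congr 1 <;> ring
    rw [e, setAverage_congr Ico_ae_eq_Icc.symm, setAverage_eq]
    have := adic_vol hN m ⌊x * (N : ℝ) ^ m⌋₊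
    unfold adicItv at this
    rw [this, EE, adicItv, inv_inv, smul_eq_mul]
  · rw [tendsto_nhdsWithin_iff]
    constructor
    · exact tendsto_const_nhds.div_atTop (tendsto_pow_atTop_atTop_of_one_lt hN1)
    · exact Eventually.of_forall fun m => div_pos (by norm_num) (hpos m)
  · refine Eventually.of_forall fun m => ?_
    have hx2 := (mem_adic hN (m := m) hx01.1).2 rfl
    rw [Real.closedBall_eq_Icc]
    refine ⟨le_trans (le_of_eq ?_) hx2.1, hx2.2.le.trans (le_of_eq ?_)⟩ <;> ring

lemma main_ineq {N : ℕ} (hN : 2 ≤ N) {p : ℝ} (hp : 1 < p) {ψ : ℝ → ℝ} (hm : Measurable ψ)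
    (h0 : ∀ x, 0 ≤ ψ x)
    (hh : Integrable ψ) (hhp : IntegrableOn (fun x => ψ x ^ p) (Ico (0:ℝ) 1))
    {L : ℝ} (hL0 : 0 < L) (hL : ∫ x in Ico (0:ℝ) 1, ψ x ≤ L) :
    L ^ p + (((N : ℝ) ^ p - 1) / ((N : ℝ) ^ p - N)) * ((∫ x in Ico (0:ℝ) 1, ψ x ^ p) -
      (∫ x in Ico (0:ℝ) 1, ψ x) * L ^ (p - 1)) ≤
      ∫ x in Ico (0:ℝ) 1, max L (MM N ψ x) ^ p := by
  have hN2 : (2:ℝ) ≤ N := by exact_mod_cast hN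
  have hNp : (N:ℝ) < (N:ℝ) ^ p := by
    conv_lhs => rw [← Real.rpow_one (N:ℝ)]
    exact Real.rpow_lt_rpow_of_exponent_lt (by linarith) hp
  have hc' : 0 < ((N : ℝ) ^ p - 1) / ((N : ℝ) ^ p - N) := div_pos (by linarith) (by linarith)
  set c' := ((N : ℝ) ^ p - 1) / ((N : ℝ) ^ p - N) with hc'd
  have hI := maxM_int hN hp h0 hh.integrableOn hhp hL0 hL
  have hb := bdd_ae hN hp h0 hh.integrableOn hhp hL0 hL
  have hXM : ∀ x, BddAbove (range fun m => EE N ψ m x) → ∀ m, XX N ψ L m x ≤ max L (MM N ψ x) :=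
    fun x hx m => (XX_mono N ψ L x).ge_of_tendsto (XX_tendsto hx) m
  have hψM : ∀ᵐ x ∂(volume.restrict (Ico (0:ℝ) 1)), ψ x ≤ max L (MM N ψ x) := by
    filter_upwards [hb, leb hN hh] with x hx hl
    exact le_max_of_le_right (le_of_tendsto' hl fun m => le_ciSup hx m)
  have hYpos : ∀ x, 0 < max L (MM N ψ x) := fun x => lt_max_of_lt_left hL0
  have e : ∀ x, max L (MM N ψ x) ^ (p - 1) * max L (MM N ψ x) = max L (MM N ψ x) ^ p := by
    intro x; rw [← Real.rpow_add_one (hYpos x).ne']; simp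
  have hYm : Measurable (fun x => max L (MM N ψ x)) := measurable_const.max (MM_meas N ψ)
  have hlim : Tendsto (fun m => ∫ x in Ico (0:ℝ) 1, XX N ψ L m x ^ (p - 1) * ψ x) atTop
      (nhds (∫ x in Ico (0:ℝ) 1, max L (MM N ψ x) ^ (p - 1) * ψ x)) := by
    refine tendsto_integral_of_dominated_convergence (fun x => max L (MM N ψ x) ^ p)
      (fun m => (((Lev.XX hN ψ L m).comp (fun t => t ^ (p - 1))).meas.mul hm).aestronglyMeasurable)
      hI ?_ ?_
    · intro m
      filter_upwards [hb, hψM] with x hx h2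
      rw [Real.norm_of_nonneg (mul_nonneg (Real.rpow_nonneg (XX_pos hL0 m x).le _) (h0 x)), ← e]
      exact mul_le_mul (Real.rpow_le_rpow (XX_pos hL0 m x).le (hXM x hx m) (by linarith)) h2
        (h0 x) (Real.rpow_nonneg (hYpos x).le _)
    · filter_upwards [hb] with x hx
      exact ((XX_tendsto hx).rpow_const (Or.inr (by linarith))).mul_const _
  have hYψ : IntegrableOn (fun x => max L (MM N ψ x) ^ (p - 1) * ψ x) (Ico (0:ℝ) 1) := by
    refine Integrable.mono' hI ((hYm.pow_const _).mul hm).aestronglyMeasurable ?_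
    filter_upwards [hψM] with x h2
    rw [Real.norm_of_nonneg (mul_nonneg (Real.rpow_nonneg (hYpos x).le _) (h0 x)), ← e]
    exact mul_le_mul_of_nonneg_left h2 (Real.rpow_nonneg (hYpos x).le _)
  have hF : ∫ x in Ico (0:ℝ) 1, ψ x ^ p ≤ ∫ x in Ico (0:ℝ) 1, max L (MM N ψ x) ^ (p - 1) * ψ x := by
    refine integral_mono_ae hhp hYψ ?_
    filter_upwards [hψM] with x h2
    rcases (h0 x).eq_or_lt with h | h
    · simp only [← h, mul_zero]
      rw [Real.zero_rpow (by linarith)]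
    · have : ψ x ^ p = ψ x ^ (p - 1) * ψ x := by rw [← Real.rpow_add_one h.ne']; simp
      simp only [this]
      exact mul_le_mul_of_nonneg_right (Real.rpow_le_rpow h.le h2 (by linarith)) h.le
  have hstep : ∀ m, c' * (∫ x in Ico (0:ℝ) 1, XX N ψ L m x ^ (p - 1) * ψ x) ≤
      (∫ x in Ico (0:ℝ) 1, max L (MM N ψ x) ^ p) -
        (L ^ p - c' * L ^ (p - 1) * ∫ x in Ico (0:ℝ) 1, ψ x) := by
    intro m
    have h1 := potential (p := p) hN h0 hh.integrableOn hL0 hL c' 1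
      (fun X s hX h1 h2 => by simpa only [one_mul] using pt_A hN2 hp hX h1 h2) m
    have h2 : ∫ x in Ico (0:ℝ) 1, XX N ψ L m x ^ p ≤ ∫ x in Ico (0:ℝ) 1, max L (MM N ψ x) ^ p := by
      refine integral_mono_ae (((Lev.XX hN ψ L m).comp (fun t => t ^ p)).intble1 hN) hI ?_
      filter_upwards [hb] with x hx
      exact Real.rpow_le_rpow (XX_pos hL0 m x).le (hXM x hx m) (by linarith)
    linarith
  have := le_of_tendsto' (hlim.const_mul c') hstep
  have h5 := mul_le_mul_of_nonneg_left hF hc'.le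
  linarith

lemma tie_break {s t : Set ℝ} (hs : MeasurableSet s) (ht : MeasurableSet t) (hst : s ⊆ t)
    (ht1 : t ⊆ Ico (0:ℝ) 1) {κ : ℝ} (h1 : volume.real s ≤ κ) (h2 : κ ≤ volume.real t) :
    ∃ E, MeasurableSet E ∧ s ⊆ E ∧ E ⊆ t ∧ volume.real E = κ := by
  have hfin : ∀ u : Set ℝ, u ⊆ t → volume u ≠ ⊤ := fun u hu =>
    ne_top_of_le_ne_top (by simp) (measure_mono (hu.trans ht1))
  let E : ℝ → Set ℝ := fun r => s ∪ (t ∩ Iio r)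
  have hEt : ∀ r, E r ⊆ t := fun r => union_subset hst inter_subset_left
  have hlip : ∀ a b, volume.real (E b) ≤ volume.real (E a) + |b - a| := by
    intro a b
    have hsub : E b ⊆ E a ∪ Ico a b := by
      rintro x (hx | ⟨hx, hxb⟩)
      · exact Or.inl (Or.inl hx)
      · rcases lt_or_ge x a with h | h
        · exact Or.inl (Or.inr ⟨hx, h⟩)
        · exact Or.inr ⟨h, hxb⟩
    have hne : volume (E a ∪ Ico a b) ≠ ⊤ := by
      refine ne_top_of_le_ne_top ?_ (measure_union_le _ _)
      exact ENNReal.add_ne_top.2 ⟨hfin _ (hEt a), by simp⟩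
    refine (measureReal_mono hsub hne).trans ((measureReal_union_le _ _).trans ?_)
    gcongr
    rw [Real.volume_real_Ico]
    exact max_le (le_abs_self _) (abs_nonneg _)
  have hcont : Continuous (fun r => volume.real (E r)) := by
    refine (LipschitzWith.of_dist_le_mul (K := 1) fun a b => ?_).continuous
    rw [Real.dist_eq, Real.dist_eq, NNReal.coe_one, one_mul, abs_le]
    constructor
    · have := hlip a b; rw [abs_sub_comm] at this; linarith
    · have := hlip b a; linarith
  have e0 : E 0 = s := by
    have : t ∩ Iio 0 = ∅ := by
      ext x; simp only [mem_inter_iff, mem_Iio, mem_empty_iff_false, iff_false, not_and, not_lt]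
      exact fun h => (ht1 h).1
    simp [E, this]
  have e1 : E 1 = t := by
    have : t ∩ Iio 1 = t := inter_eq_left.2 fun x hx => (ht1 hx).2
    simp only [E, this]
    exact union_eq_right.2 hst
  obtain ⟨r, _, hr⟩ := intermediate_value_Icc (zero_le_one (α := ℝ)) hcont.continuousOn
    (show κ ∈ Icc (volume.real (E 0)) (volume.real (E 1)) by rw [e0, e1]; exact ⟨h1, h2⟩)
  exact ⟨E r, hs.union (ht.inter measurableSet_Iio), subset_union_left, hEt r, hr⟩

lemma quantile {M : ℝ → ℝ} (hM : Measurable M) {κ f : ℝ} (hκ0 : 0 < κ) (hκ1 : κ < 1)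
    (hf : ∀ᵐ x ∂(volume.restrict (Ico (0:ℝ) 1)), f ≤ M x) :
    ∃ L E, f ≤ L ∧ MeasurableSet E ∧ E ⊆ Ico (0:ℝ) 1 ∧ volume.real E = κ ∧
      (∀ x ∈ E, L ≤ M x) ∧ ∀ x ∈ Ico (0:ℝ) 1 \ E, M x ≤ L := by
  let T : ℝ → Set ℝ := fun t => Ico (0:ℝ) 1 ∩ {x | t < M x}
  have hTm : ∀ t, MeasurableSet (T t) := fun t => measurableSet_Ico.inter (hM measurableSet_Ioi)
  have hTfin : ∀ u : Set ℝ, u ⊆ Ico (0:ℝ) 1 → volume u ≠ ⊤ := fun u hu =>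
    ne_top_of_le_ne_top (by simp) (measure_mono hu)
  have hTanti : ∀ a b, a ≤ b → T b ⊆ T a := fun a b hab x hx => ⟨hx.1, lt_of_le_of_lt hab hx.2⟩
  let S : Set ℝ := {t | volume.real (T t) ≤ κ}
  have hSne : S.Nonempty := by
    have h1 : Tendsto (fun n : ℕ => volume (T n)) atTop (nhds (volume (⋂ n : ℕ, T n))) :=
      tendsto_measure_iInter_atTop (fun n => (hTm n).nullMeasurableSet)
        (fun a b hab => hTanti _ _ (by exact_mod_cast hab)) ⟨0, hTfin _ inter_subset_left⟩
    have h2 : (⋂ n : ℕ, T n) = ∅ := by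
      ext x
      simp only [mem_iInter, mem_empty_iff_false, iff_false, not_forall]
      obtain ⟨n, hn⟩ := exists_nat_ge (M x)
      exact ⟨n, fun h => absurd h.2 (not_lt.2 hn)⟩
    rw [h2, measure_empty] at h1
    obtain ⟨n, hn⟩ := (h1.eventually_lt_const (ENNReal.ofReal_pos.2 hκ0)).exists
    refine ⟨n, ?_⟩
    show volume.real _ ≤ κ
    exact ENNReal.toReal_le_of_le_ofReal hκ0.le hn.le
  have hSlb : ∀ t ∈ S, f ≤ t := by
    intro t ht
    by_contra hlt
    push Not at hlt
    have : volume.real (T t) = 1 := by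
      have : T t =ᵐ[volume] Ico (0:ℝ) 1 := by
        rw [ae_restrict_iff' measurableSet_Ico] at hf
        filter_upwards [hf] with x hx
        refine propext ⟨fun h => h.1, fun h => ⟨h, lt_of_lt_of_le hlt (hx h)⟩⟩
      rw [measureReal_congr this]; simp
    have h3 : volume.real (T t) ≤ κ := ht
    linarith
  have hbdd : BddBelow S := ⟨f, hSlb⟩
  set L := sInf S with hLdef
  have hfL : f ≤ L := le_csInf hSne hSlb
  have hup : ∀ t, L < t → volume.real (T t) ≤ κ := by
    intro t ht
    obtain ⟨s, hs, hst⟩ := exists_lt_of_csInf_lt hSne ht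
    exact (measureReal_mono (hTanti _ _ hst.le) (hTfin _ inter_subset_left)).trans hs
  have hdown : ∀ t, t < L → κ ≤ volume.real (T t) := by
    intro t ht
    by_contra h
    push Not at h
    exact absurd (csInf_le hbdd (show t ∈ S from h.le)) (not_le.2 ht)
  have h1 : volume.real (T L) ≤ κ := by
    have hu : T L = ⋃ n : ℕ, T (L + 1 / ((n : ℝ) + 1)) := by
      ext x
      simp only [mem_iUnion]
      constructor
      · intro hx
        have hx2 : L < M x := hx.2
        obtain ⟨n, hn⟩ := exists_nat_one_div_lt (sub_pos.2 hx2)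
        exact ⟨n, hx.1, by show _ < M x; linarith⟩
      · rintro ⟨n, hx⟩
        exact hTanti _ _ (by have : (0:ℝ) < 1 / ((n : ℝ) + 1) := by positivity
                             linarith) hx
    have hmono : Monotone (fun n : ℕ => T (L + 1 / ((n : ℝ) + 1))) := by
      intro a b hab
      refine hTanti _ _ ?_
      gcongr
    refine ENNReal.toReal_le_of_le_ofReal hκ0.le ?_
    rw [hu, hmono.measure_iUnion]
    refine iSup_le fun n => ?_
    rw [← ENNReal.ofReal_toReal (hTfin (T (L + 1 / ((n : ℝ) + 1))) inter_subset_left)]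
    exact ENNReal.ofReal_le_ofReal (hup _ (by have : (0:ℝ) < 1 / ((n : ℝ) + 1) := by positivity
                                              linarith))
  have h2 : κ ≤ volume.real (Ico (0:ℝ) 1 ∩ {x | L ≤ M x}) := by
    have hu : Ico (0:ℝ) 1 ∩ {x | L ≤ M x} = ⋂ n : ℕ, T (L - 1 / ((n : ℝ) + 1)) := by
      ext x
      simp only [mem_iInter]
      constructor
      · rintro ⟨hx, hx2⟩ n
        refine ⟨hx, ?_⟩
        have : (0:ℝ) < 1 / ((n : ℝ) + 1) := by positivity
        have hx2 : L ≤ M x := hx2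
        show _ < M x
        linarith
      · intro hx
        refine ⟨(hx 0).1, ?_⟩
        show L ≤ M x
        by_contra hlt
        push Not at hlt
        obtain ⟨n, hn⟩ := exists_nat_one_div_lt (sub_pos.2 hlt)
        have h3 : L - 1 / ((n : ℝ) + 1) < M x := (hx n).2
        linarith
    have hanti : Antitone (fun n : ℕ => T (L - 1 / ((n : ℝ) + 1))) := by
      intro a b hab
      refine hTanti _ _ ?_
      gcongr
    rw [measureReal_def, ← ENNReal.ofReal_le_iff_le_toReal (hTfin _ inter_subset_left), hu,
      hanti.measure_iInter (fun n => (hTm _).nullMeasurableSet) ⟨0, hTfin _ inter_subset_left⟩]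
    refine le_iInf fun n => ?_
    rw [ENNReal.ofReal_le_iff_le_toReal (hTfin _ inter_subset_left)]
    exact hdown _ (by have : (0:ℝ) < 1 / ((n : ℝ) + 1) := by positivity
                      linarith)
  obtain ⟨E, hEm, hE1, hE2, hE3⟩ := tie_break (hTm L)
    (measurableSet_Ico.inter (hM measurableSet_Ici) : MeasurableSet (Ico (0:ℝ) 1 ∩ {x | L ≤ M x}))
    (fun x hx => ⟨hx.1, show L ≤ M x from le_of_lt (show L < M x from hx.2)⟩) inter_subset_left h1 h2
  refine ⟨L, E, hfL, hEm, hE2.trans inter_subset_left, hE3, fun x hx => (hE2 hx).2, fun x hx => ?_⟩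
  by_contra h
  push Not at h
  exact hx.2 (hE1 ⟨hx.1, h⟩)

lemma adicMax_eq {N : ℕ} (hN : 2 ≤ N) {φ : ℝ → ℝ} (h0 : ∀ x ∈ Ico (0:ℝ) 1, 0 ≤ φ x) {x : ℝ}
    (hx : x ∈ Ico (0:ℝ) 1) :
    adicMax N φ x = MM N ((Ico (0:ℝ) 1).indicator φ) x := by
  have key : ∀ m k, k < N ^ m → adicAvg N φ m k =
      (N : ℝ) ^ m * ∫ y in adicItv N m k, (Ico (0:ℝ) 1).indicator φ y := by
    intro m k hk
    unfold adicAvg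
    congr 1
    refine setIntegral_congr_fun (adic_meas _ _ _) fun y hy => ?_
    have hy' := adic_sub hN hk hy
    simp only [indicator_of_mem hy', abs_of_nonneg (h0 y hy')]
  unfold adicMax MM iSup
  congr 1
  ext r
  simp only [mem_ofPred_eq, mem_range]
  constructor
  · rintro ⟨m, k, hk, hxk, rfl⟩
    refine ⟨m, ?_⟩
    rw [key m k hk, EE, (mem_adic hN hx.1).1 hxk]
  · rintro ⟨m, rfl⟩
    exact ⟨m, _, floor_lt hN hx, (mem_adic hN hx.1).2 rfl, (key m _ (floor_lt hN hx)).symm⟩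

lemma arith {p c' κ f A L I : ℝ} (hp : 1 < p) (hc' : 0 < c') (hf : 0 < f) (hA : 0 < A) (hL : 0 < L)
    (hκ0 : 0 < κ)
    (hκ : κ ≤ (p - 1) / p * c' * (f / A)) (h1 : κ * L ^ p ≤ I)
    (h2 : κ * L ^ p + c' * (f * A ^ (p - 1) - f * L ^ (p - 1)) ≤ I) : κ * A ^ p ≤ I := by
  rcases le_total A L with h | h
  · exact (mul_le_mul_of_nonneg_left (Real.rpow_le_rpow hA.le h (by linarith)) hκ0.le).trans h1
  · have hb := pt_B hp hL h
    have e1 : A ^ p = A ^ (p - 1) * A := by rw [← Real.rpow_add_one hA.ne']; simp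
    have hq : 0 < p - 1 := by linarith
    have hb2 : p * L ^ (p - 1) * A ≤ A ^ p + (p - 1) * L ^ p := by
      have := mul_le_mul_of_nonneg_left hb hq.le
      rw [mul_assoc (p / (p - 1)) (A ^ (p - 1)), ← e1] at this
      have a1 : (p - 1) * (A ^ p - p / (p - 1) * A ^ p) = - A ^ p := by field_simp; ring
      have a2 : (p - 1) * (L ^ p - p / (p - 1) * L ^ (p - 1) * A)
        = (p - 1) * L ^ p - p * L ^ (p - 1) * A := by field_simp
      rw [a1, a2] at this
      linarith
    have hpos : 0 ≤ A ^ p - L ^ p := sub_nonneg.2 (Real.rpow_le_rpow hL.le h (by linarith))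
    have h3 := mul_le_mul_of_nonneg_right hκ hpos
    have h4 : (p - 1) / p * c' * (f / A) * (A ^ p - L ^ p) ≤
        c' * (f * A ^ (p - 1) - f * L ^ (p - 1)) := by
      have h5 : (p - 1) * (A ^ p - L ^ p) ≤ p * A * (A ^ (p - 1) - L ^ (p - 1)) := by
        have : p * A * (A ^ (p - 1) - L ^ (p - 1)) = p * A ^ p - p * L ^ (p - 1) * A := by
          rw [e1]; ring
        rw [this]; linarith
      have h6 := mul_le_mul_of_nonneg_left h5 (by positivity : 0 ≤ c' * f / (p * A))
      calc _ = c' * f / (p * A) * ((p - 1) * (A ^ p - L ^ p)) := by field_simp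
        _ ≤ _ := h6
        _ = _ := by field_simp
    linarith

lemma lower {N : ℕ} (hN : 2 ≤ N) {p f F κ A : ℝ} (hp : 1 < p) (hf : 0 < f) (hF : 0 < F)
    (hA : 0 < A) (hFA : F = f * A ^ (p - 1)) (hκ0 : 0 < κ) (hκ1 : κ < 1)
    (hκ : κ ≤ (p - 1) / p * (((N : ℝ) ^ p - 1) / ((N : ℝ) ^ p - N)) * (f / A))
    {φ : ℝ → ℝ} (hm : Measurable φ) (h0 : ∀ x ∈ Ico (0:ℝ) 1, 0 ≤ φ x)
    (hφf : (∫ x in Ico (0:ℝ) 1, φ x) = f) (hφF : (∫ x in Ico (0:ℝ) 1, φ x ^ p) = F) :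
    κ * A ^ p ≤ supMeas N p κ φ := by
  have hN2 : (2:ℝ) ≤ N := by exact_mod_cast hN
  have hNp : (N:ℝ) < (N:ℝ) ^ p := by
    conv_lhs => rw [← Real.rpow_one (N:ℝ)]
    exact Real.rpow_lt_rpow_of_exponent_lt (by linarith) hp
  have hc' : 0 < ((N : ℝ) ^ p - 1) / ((N : ℝ) ^ p - N) := div_pos (by linarith) (by linarith)
  have hφi : IntegrableOn φ (Ico (0:ℝ) 1) := by
    by_contra h
    rw [integral_undef h] at hφf; linarith
  have hφpi : IntegrableOn (fun x => φ x ^ p) (Ico (0:ℝ) 1) := by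
    by_contra h
    rw [integral_undef h] at hφF; linarith
  set ψ := (Ico (0:ℝ) 1).indicator φ with hψ
  have hψφ : ∀ x ∈ Ico (0:ℝ) 1, ψ x = φ x := fun x hx => indicator_of_mem hx _
  have hψm : Measurable ψ := hm.indicator measurableSet_Ico
  have hψ0 : ∀ x, 0 ≤ ψ x := fun x => indicator_nonneg h0 x
  have hψi : Integrable ψ := (integrable_indicator_iff measurableSet_Ico).2 hφi
  have hψpi : IntegrableOn (fun x => ψ x ^ p) (Ico (0:ℝ) 1) :=
    (integrableOn_congr_fun (fun x hx => by simp only [hψφ x hx]) measurableSet_Ico).2 hφpi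
  have hψf : (∫ x in Ico (0:ℝ) 1, ψ x) = f := by
    rw [← hφf]; exact setIntegral_congr_fun measurableSet_Ico hψφ
  have hψF : (∫ x in Ico (0:ℝ) 1, ψ x ^ p) = F := by
    rw [← hφF]
    exact setIntegral_congr_fun measurableSet_Ico (fun x hx => by simp only [hψφ x hx])
  have hM0 : ∀ x, 0 ≤ MM N ψ x := fun x => Real.iSup_nonneg fun m =>
    mul_nonneg (by positivity) (setIntegral_nonneg (adic_meas _ _ _) fun y _ => hψ0 y)
  have hb := bdd_ae hN hp hψ0 hψi.integrableOn hψpi hf hψf.le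
  have hfM : ∀ᵐ x ∂(volume.restrict (Ico (0:ℝ) 1)), f ≤ MM N ψ x := by
    filter_upwards [hb, ae_restrict_mem measurableSet_Ico] with x hx hx2
    rw [← hψf, ← EE_zero (N := N) hx2]
    exact le_ciSup hx 0
  obtain ⟨L, E, hfL, hEm, hE1, hEκ, hEL, hEc⟩ := quantile (MM_meas N ψ) hκ0 hκ1 hfM
  have hL0 : 0 < L := hf.trans_le hfL
  have hmain := main_ineq hN hp hψm hψ0 hψi hψpi hL0 (hψf.le.trans hfL)
  have hIf := maxM_int hN hp hψ0 hψi.integrableOn hψpi hf hψf.le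
  have hIL := maxM_int hN hp hψ0 hψi.integrableOn hψpi hL0 (hψf.le.trans hfL)
  have hz : ∀ E' : Set ℝ, MeasurableSet E' → E' ⊆ Ico (0:ℝ) 1 →
      ∫ x in E', adicMax N φ x ^ p = ∫ x in E', MM N ψ x ^ p := fun E' h1 h2 =>
    setIntegral_congr_fun h1 fun x hx => by simp only [adicMax_eq hN h0 (h2 hx), hψ]
  have hbddA : BddAbove {z : ℝ | ∃ E : Set ℝ, MeasurableSet E ∧ E ⊆ Set.Ico (0:ℝ) 1 ∧
      volume E = ENNReal.ofReal κ ∧ z = ∫ x in E, adicMax N φ x ^ p} := by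
    refine ⟨∫ x in Ico (0:ℝ) 1, max f (MM N ψ x) ^ p, ?_⟩
    rintro z ⟨E', h1, h2, _, rfl⟩
    rw [hz E' h1 h2]
    have hle : ∀ x, MM N ψ x ^ p ≤ max f (MM N ψ x) ^ p := fun x =>
      Real.rpow_le_rpow (hM0 x) (le_max_right _ _) (by linarith)
    refine (integral_mono_of_nonneg (Eventually.of_forall fun x => Real.rpow_nonneg (hM0 x) p)
      (hIf.mono_set h2) (Eventually.of_forall hle)).trans ?_
    exact setIntegral_mono_set hIf
      (Eventually.of_forall fun x => Real.rpow_nonneg (le_max_of_le_right (hM0 x)) p)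
      (LE.le.eventuallyLE h2)
  have hEv : volume E = ENNReal.ofReal κ := by
    rw [← hEκ, measureReal_def, ENNReal.ofReal_toReal]
    exact ne_top_of_le_ne_top (by simp) (measure_mono hE1)
  have hle : (∫ x in E, MM N ψ x ^ p) ≤ supMeas N p κ φ := by
    rw [← hz E hEm hE1]
    exact le_csSup hbddA ⟨E, hEm, hE1, hEv, rfl⟩
  refine le_trans ?_ hle
  have hEI : ∫ x in E, MM N ψ x ^ p = ∫ x in E, max L (MM N ψ x) ^ p :=
    setIntegral_congr_fun hEm fun x hx => by simp only [max_eq_right (hEL x hx)]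
  have hsplit := integral_inter_add_sdiff (μ := volume) hEm hIL
  have hinter : Ico (0:ℝ) 1 ∩ E = E := inter_eq_right.2 hE1
  have hcomp : ∫ x in Ico (0:ℝ) 1 \ E, max L (MM N ψ x) ^ p = (1 - κ) * L ^ p := by
    rw [setIntegral_congr_fun (g := fun _ => L ^ p) (measurableSet_Ico.diff hEm)
      (fun x hx => by simp only [max_eq_left (hEc x hx)]), setIntegral_const, smul_eq_mul,
      measureReal_sdiff hE1 hEm (by simp), hEκ]
    simp
  rw [hinter, hcomp, ← hEI] at hsplit
  rw [hψf, hψF, hFA] at hmain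
  refine arith (I := ∫ x in E, MM N ψ x ^ p) hp hc' hf hA hL0 hκ0 hκ ?_ ?_
  · rw [hEI]
    have : ∫ x in E, L ^ p = κ * L ^ p := by rw [setIntegral_const, hEκ, smul_eq_mul]
    rw [← this]
    refine setIntegral_mono_on (integrableOn_const (by rw [hEv]; exact ENNReal.ofReal_ne_top))
      (hIL.mono_set hE1) hEm fun x _ =>
      Real.rpow_le_rpow hL0.le (le_max_left _ _) (by linarith)
  · linarith

lemma upper {N : ℕ} (hN : 2 ≤ N) {p f F κ A : ℝ} (hp : 1 < p) (hf : 0 < f)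
    (hA : 0 < A) (hFA : F = f * A ^ (p - 1)) (hfA : f ≤ A) (hκ0 : 0 < κ) :
    ∃ φ : ℝ → ℝ, Measurable φ ∧ (∀ x ∈ Set.Ico (0:ℝ) 1, 0 ≤ φ x) ∧
    (∫ x in Set.Ico (0:ℝ) 1, φ x) = f ∧ (∫ x in Set.Ico (0:ℝ) 1, φ x ^ p) = F ∧
    supMeas N p κ φ ≤ κ * A ^ p := by
  have hfA1 : f / A ≤ 1 := (div_le_one hA).2 hfA
  have hfA0 : 0 ≤ f / A := by positivity
  have hint : ∀ B : ℝ, ∫ x in Ico (0:ℝ) 1, (Ico (0:ℝ) (f / A)).indicator (fun _ => B) x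
      = f / A * B := by
    intro B
    rw [setIntegral_indicator measurableSet_Ico, Ico_inter_Ico, setIntegral_const, smul_eq_mul]
    simp [min_eq_right hfA1, hfA0]
  have hφm : Measurable ((Ico (0:ℝ) (f / A)).indicator fun _ => A) :=
    measurable_const.indicator measurableSet_Ico
  have hφ0 : ∀ x, 0 ≤ (Ico (0:ℝ) (f / A)).indicator (fun _ => A) x := fun x =>
    indicator_nonneg (fun _ _ => hA.le) x
  have hφA : ∀ x, (Ico (0:ℝ) (f / A)).indicator (fun _ => A) x ≤ A := fun x =>
    indicator_le_self' (fun _ _ => hA.le) x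
  refine ⟨(Ico (0:ℝ) (f / A)).indicator fun _ => A, hφm, fun x _ => hφ0 x, ?_, ?_, ?_⟩
  · rw [hint]; field_simp
  · have : ∀ x, (Ico (0:ℝ) (f / A)).indicator (fun _ => A) x ^ p =
        (Ico (0:ℝ) (f / A)).indicator (fun _ => A ^ p) x := by
      intro x
      by_cases hx : x ∈ Ico (0:ℝ) (f / A)
      · simp only [indicator_of_mem hx]
      · simp only [indicator_of_notMem hx]; rw [Real.zero_rpow (by linarith)]
    simp only [this]
    rw [hint, hFA]
    have e1 : A ^ p = A ^ (p - 1) * A := by rw [← Real.rpow_add_one hA.ne']; simp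
    rw [e1]; field_simp
  · set φ := (Ico (0:ℝ) (f / A)).indicator fun _ => A with hφ
    have havg : ∀ m k, 0 ≤ adicAvg N φ m k ∧ adicAvg N φ m k ≤ A := by
      intro m k
      have hp0 : (0:ℝ) < (N:ℝ) ^ m := by positivity
      refine ⟨mul_nonneg hp0.le (setIntegral_nonneg (adic_meas _ _ _) fun y _ => abs_nonneg _), ?_⟩
      have h1 := norm_setIntegral_le_of_norm_le_const (μ := volume) (s := adicItv N m k)
        (f := fun y => |φ y|) (C := A) (by simp [adicItv])
        (fun y _ => by
          rw [Real.norm_eq_abs, abs_abs, abs_of_nonneg (hφ0 y)]; exact hφA y)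
      rw [adic_vol hN] at h1
      have h2 := mul_le_mul_of_nonneg_left ((le_abs_self _).trans h1) hp0.le
      unfold adicAvg
      refine h2.trans (le_of_eq ?_)
      field_simp
    have hM : ∀ x, 0 ≤ adicMax N φ x ∧ adicMax N φ x ≤ A := by
      intro x
      constructor
      · refine Real.sSup_nonneg ?_
        rintro r ⟨m, k, _, _, rfl⟩; exact (havg m k).1
      · refine Real.sSup_le ?_ hA.le
        rintro r ⟨m, k, _, _, rfl⟩; exact (havg m k).2
    refine Real.sSup_le ?_ (by positivity)
    rintro z ⟨E, hE, hE1, hE2, rfl⟩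
    have h1 := norm_setIntegral_le_of_norm_le_const (μ := volume) (s := E)
        (f := fun x => adicMax N φ x ^ p) (C := A ^ p) (by rw [hE2]; exact ENNReal.ofReal_lt_top)
        (fun y _ => by
          rw [Real.norm_of_nonneg (Real.rpow_nonneg (hM y).1 p)]
          exact Real.rpow_le_rpow (hM y).1 (hM y).2 (by linarith))
    rw [measureReal_def, hE2, ENNReal.toReal_ofReal hκ0.le, mul_comm] at h1
    exact (le_abs_self _).trans h1

end helpers

theorem stmt4 (N : ℕ) (hN : 2 ≤ N) (p f F κ c : ℝ) (hp : 1 < p)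
    (hf : 0 < f) (hF : 0 < F) (hfF : f ^ p ≤ F)
    (hc : c = ((p - 1) / p) * (((N : ℝ) ^ p - 1) / ((N : ℝ) ^ p - N)))
    (hκ1 : 0 < κ) (hκ2 : κ ≤ c * (f ^ p / F) ^ (1 / (p - 1))) :
    Dp N p F f κ = κ * (F / f) ^ (p / (p - 1)) := by
  have hq : 0 < p - 1 := by linarith
  have hN2 : (2:ℝ) ≤ N := by exact_mod_cast hN
  have hNp : (N:ℝ) < (N:ℝ) ^ p := by
    conv_lhs => rw [← Real.rpow_one (N:ℝ)]
    exact Real.rpow_lt_rpow_of_exponent_lt (by linarith) hp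
  have hc1 : c < 1 := by
    have hb := one_add_mul_self_lt_rpow_one_add (s := (N:ℝ) - 1) (by linarith)
      (by linarith) hp
    rw [add_sub_cancel] at hb
    rw [hc, div_mul_div_comm, div_lt_one (mul_pos (by linarith) (by linarith))]
    nlinarith
  have hFf : 0 < F / f := by positivity
  obtain ⟨A, hAdef⟩ : ∃ A, A = (F / f) ^ (1 / (p - 1)) := ⟨_, rfl⟩
  have hA : 0 < A := by rw [hAdef]; positivity
  have hAp1 : A ^ (p - 1) = F / f := by
    rw [hAdef, ← Real.rpow_mul hFf.le, one_div_mul_cancel hq.ne', Real.rpow_one]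
  have hAp : (F / f) ^ (p / (p - 1)) = A ^ p := by
    rw [hAdef, ← Real.rpow_mul hFf.le]; congr 1; ring
  have hFA : F = f * A ^ (p - 1) := by rw [hAp1]; field_simp
  have hfp : f ^ p = f ^ (p - 1) * f := by rw [← Real.rpow_add_one hf.ne']; simp
  have hfA' : (f ^ p / F) ^ (1 / (p - 1)) = f / A := by
    have : f ^ p / F = (f / A) ^ (p - 1) := by
      rw [Real.div_rpow hf.le hA.le, hAp1, hfp]; field_simp
    rw [this, ← Real.rpow_mul (by positivity), mul_one_div_cancel hq.ne', Real.rpow_one]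
  have hfA : f ≤ A := by
    have : f ^ (p - 1) ≤ A ^ (p - 1) := by
      rw [hAp1, le_div_iff₀ hf, ← hfp]; exact hfF
    exact (Real.rpow_le_rpow_iff hf.le hA.le hq).1 this
  rw [hfA'] at hκ2
  have hκlt : κ < 1 := by
    have h1 : f / A ≤ 1 := (div_le_one hA).2 hfA
    have h2 : 0 < f / A := by positivity
    nlinarith
  rw [hc] at hκ2
  rw [hAp]
  have hlow : ∀ y ∈ {y : ℝ | ∃ φ : ℝ → ℝ, Measurable φ ∧ (∀ x ∈ Set.Ico (0:ℝ) 1, 0 ≤ φ x) ∧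
      (∫ x in Set.Ico (0:ℝ) 1, φ x) = f ∧ (∫ x in Set.Ico (0:ℝ) 1, φ x ^ p) = F ∧
      y = supMeas N p κ φ}, κ * A ^ p ≤ y := by
    rintro y ⟨φ, hm, h0, h1, h2, rfl⟩
    exact lower hN hp hf hF hA hFA hκ1 hκlt hκ2 hm h0 h1 h2
  obtain ⟨φ, hm, h0, h1, h2, h3⟩ := upper hN hp hf hA hFA hfA hκ1
  refine le_antisymm ?_ (le_csInf ⟨_, φ, hm, h0, h1, h2, rfl⟩ hlow)
  exact (csInf_le ⟨_, hlow⟩ ⟨φ, hm, h0, h1, h2, rfl⟩).trans h3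
end
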